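/- arXiv:1708.02724 — 2 statements merged into one kernel-verified Lean document; each statement's English description precedes it below -/
import Mathlib

section
/- Finite-time blow-up for the 1D Boussinesq system: Let g₀, P₀ ∈ C^∞([−π/4,π/4]) satisfy: (1) g₀ is odd and g₀ ≥ 0, g₀' ≥ 0 on [0,π/4]; (2) P₀ is even and P₀ ≥ 0, P₀' ≥ 0, P₀ + P₀'' ≥ 0 on [0,π/4]; (3) P₀(π/4) > √2 · P₀(0). Then there is no global smooth solution: there does not exist a pair (g,P) ∈ C^∞([0,∞)×[−π/4,π/4]) solving the 1D Boussinesq system for all t ≥ 0 with g(0,·) = g₀, P(0,·) = P₀, and g(t,·) odd, P(t,·) even for all t ≥ 0. -/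
open Set Real MeasureTheory
open scoped ENNReal NNReal Topology

noncomputable section

/-- The interval `[-π/4, π/4]`. -/
def I14 : Set ℝ := Icc (-(π/4)) (π/4)

/-- A classical solution of the 1D Boussinesq system
`∂ₜ g + 2G ∂_θ g = sin θ · P + cos θ · ∂_θ P`, `∂ₜ P + 2G ∂_θ P = P ∂_θ G` on the time set
`J`, on the interval `[-π/4, π/4]`, where for each `t`, `G(t,·)` is the unique odd `C²`
function with `∂_{θθ} G + 4G = g(t,·)` and `G(t, ±π/4) = 0`; `g(t,·)` is odd and `P(t,·)`
is even. -/
structure OneDSol (J : Set ℝ) (g P G : ℝ → ℝ → ℝ) : Prop where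
  g_odd : ∀ t ∈ J, ∀ θ ∈ I14, g t (-θ) = - g t θ
  P_even : ∀ t ∈ J, ∀ θ ∈ I14, P t (-θ) = P t θ
  G_odd : ∀ t ∈ J, ∀ θ ∈ I14, G t (-θ) = - G t θ
  G_C2 : ∀ t ∈ J, ContDiffOn ℝ 2 (G t) I14
  G_eq : ∀ t ∈ J, ∀ θ ∈ I14, iteratedDerivWithin 2 (G t) I14 θ + 4 * G t θ = g t θ
  G_bc₁ : ∀ t ∈ J, G t (π/4) = 0
  G_bc₂ : ∀ t ∈ J, G t (-(π/4)) = 0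
  reg_g : ∀ t ∈ J, DifferentiableOn ℝ (g t) I14
  reg_P : ∀ t ∈ J, DifferentiableOn ℝ (P t) I14
  reg_gt : ∀ θ ∈ I14, ∀ t ∈ J, DifferentiableWithinAt ℝ (fun s => g s θ) J t
  reg_Pt : ∀ θ ∈ I14, ∀ t ∈ J, DifferentiableWithinAt ℝ (fun s => P s θ) J t
  eq_g : ∀ t ∈ J, ∀ θ ∈ I14,
    derivWithin (fun s => g s θ) J t + 2 * G t θ * derivWithin (g t) I14 θ
      = Real.sin θ * P t θ + Real.cos θ * derivWithin (P t) I14 θ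
  eq_P : ∀ t ∈ J, ∀ θ ∈ I14,
    derivWithin (fun s => P s θ) J t + 2 * G t θ * derivWithin (P t) I14 θ
      = P t θ * derivWithin (G t) I14 θ

/-- Sup-norm over `[-π/4, π/4]`, valued in `ℝ≥0∞`. -/
def supNormI (f : ℝ → ℝ) : ℝ≥0∞ := ⨆ θ : I14, (‖f (θ : ℝ)‖₊ : ℝ≥0∞)

/-- `α`-Hölder seminorm over `[-π/4, π/4]`, valued in `ℝ≥0∞`. -/
def hSemi (α : ℝ) (f : ℝ → ℝ) : ℝ≥0∞ :=
  ⨆ p : {q : I14 × I14 // (q.1 : ℝ) ≠ (q.2 : ℝ)},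
    (‖f (p.1.1 : ℝ) - f (p.1.2 : ℝ)‖₊ : ℝ≥0∞) /
      ENNReal.ofReal (|(p.1.1 : ℝ) - (p.1.2 : ℝ)| ^ α)

/-- The `C^{k,α}` norm on `[-π/4,π/4]`:
`Σ_{j ≤ k} sup |f^{(j)}| + Hölder seminorm of f^{(k)}`, valued in `ℝ≥0∞`. -/
def CkaNorm (k : ℕ) (α : ℝ) (f : ℝ → ℝ) : ℝ≥0∞ :=
  (Finset.range (k+1)).sum (fun j => supNormI (iteratedDerivWithin j f I14)) +
    hSemi α (iteratedDerivWithin k f I14)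

/-- The `C^k` norm `Σ_{j ≤ k} sup |f^{(j)}|` on `[-π/4,π/4]`, valued in `ℝ≥0∞`. -/
def CkNorm (k : ℕ) (f : ℝ → ℝ) : ℝ≥0∞ :=
  (Finset.range (k+1)).sum (fun j => supNormI (iteratedDerivWithin j f I14))


/-- The space-time domain `[0,∞) × [-π/4,π/4]`. -/
def spaceTime : Set (ℝ × ℝ) := Ici (0:ℝ) ×ˢ I14

/-- Partial derivative in the angle variable. -/
def dX (F : ℝ → ℝ → ℝ) (t θ : ℝ) : ℝ := derivWithin (F t) I14 θ

/-- Partial derivative in the time variable. -/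
def dT (F : ℝ → ℝ → ℝ) (t θ : ℝ) : ℝ := derivWithin (fun s => F s θ) (Ici 0) t

/-- Joint smoothness on space-time. -/
def SmoothST (F : ℝ → ℝ → ℝ) : Prop :=
  ContDiffOn ℝ (⊤ : ℕ∞) (fun q : ℝ × ℝ => F q.1 q.2) spaceTime

lemma uniqueDiffOn_I14 : UniqueDiffOn ℝ I14 :=
  uniqueDiffOn_Icc (by linarith [Real.pi_pos])

lemma uniqueDiffOn_spaceTime : UniqueDiffOn ℝ spaceTime :=
  (uniqueDiffOn_Ici 0).prod uniqueDiffOn_I14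

lemma mem_I14_of_mem {θ : ℝ} (h : θ ∈ Icc (0:ℝ) (π/4)) : θ ∈ I14 :=
  ⟨by linarith [Real.pi_pos, h.1], h.2⟩

lemma Icc_subset_I14 : Icc (0:ℝ) (π/4) ⊆ I14 := fun _ h => mem_I14_of_mem h

lemma SmoothST.hasFDerivWithinAt {F : ℝ → ℝ → ℝ} (hF : SmoothST F) {t θ : ℝ} (ht : 0 ≤ t)
    (hθ : θ ∈ I14) :
    HasFDerivWithinAt (fun q : ℝ × ℝ => F q.1 q.2)
      (fderivWithin ℝ (fun q : ℝ × ℝ => F q.1 q.2) spaceTime (t, θ)) spaceTime (t, θ) :=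
  ((hF.differentiableOn (by simp)) (t, θ) ⟨ht, hθ⟩).hasFDerivWithinAt

lemma hasDerivWithinAt_slice_X {E : Type*} [NormedAddCommGroup E] [NormedSpace ℝ E]
    {f : ℝ × ℝ → E} {f' : ℝ × ℝ →L[ℝ] E} {t θ : ℝ}
    (h : HasFDerivWithinAt f f' spaceTime (t, θ)) (ht : 0 ≤ t) :
    HasDerivWithinAt (fun ϑ => f (t, ϑ)) (f' (0, 1)) I14 θ :=
  h.comp_hasDerivWithinAt (f := fun ϑ : ℝ => (t, ϑ)) θ
    ((hasDerivWithinAt_const θ I14 t).prodMk (hasDerivWithinAt_id θ I14))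
    (fun _ hϑ => ⟨ht, hϑ⟩)

lemma hasDerivWithinAt_slice_T {E : Type*} [NormedAddCommGroup E] [NormedSpace ℝ E]
    {f : ℝ × ℝ → E} {f' : ℝ × ℝ →L[ℝ] E} {t θ : ℝ}
    (h : HasFDerivWithinAt f f' spaceTime (t, θ)) (hθ : θ ∈ I14) :
    HasDerivWithinAt (fun s => f (s, θ)) (f' (1, 0)) (Ici 0) t :=
  h.comp_hasDerivWithinAt (f := fun s : ℝ => (s, θ)) t
    ((hasDerivWithinAt_id t (Ici 0)).prodMk (hasDerivWithinAt_const t (Ici 0) θ))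
    (fun _ hs => ⟨hs, hθ⟩)

namespace SmoothST

variable {F : ℝ → ℝ → ℝ} {t θ : ℝ}

lemma dX_eq (hF : SmoothST F) (ht : 0 ≤ t) (hθ : θ ∈ I14) :
    dX F t θ = fderivWithin ℝ (fun q : ℝ × ℝ => F q.1 q.2) spaceTime (t, θ) (0, 1) :=
  (hasDerivWithinAt_slice_X (hF.hasFDerivWithinAt ht hθ) ht).derivWithin (uniqueDiffOn_I14 θ hθ)

lemma dT_eq (hF : SmoothST F) (ht : 0 ≤ t) (hθ : θ ∈ I14) :
    dT F t θ = fderivWithin ℝ (fun q : ℝ × ℝ => F q.1 q.2) spaceTime (t, θ) (1, 0) :=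
  (hasDerivWithinAt_slice_T (hF.hasFDerivWithinAt ht hθ) hθ).derivWithin
    (uniqueDiffOn_Ici 0 t ht)

lemma hasDeriv_X (hF : SmoothST F) (ht : 0 ≤ t) (hθ : θ ∈ I14) :
    HasDerivWithinAt (F t) (dX F t θ) I14 θ := by
  rw [hF.dX_eq ht hθ]
  exact hasDerivWithinAt_slice_X (hF.hasFDerivWithinAt ht hθ) ht

lemma hasDeriv_T (hF : SmoothST F) (ht : 0 ≤ t) (hθ : θ ∈ I14) :
    HasDerivWithinAt (fun s => F s θ) (dT F t θ) (Ici 0) t := by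
  rw [hF.dT_eq ht hθ]
  exact hasDerivWithinAt_slice_T (hF.hasFDerivWithinAt ht hθ) hθ

lemma contDiffOn_fderivWithin (hF : SmoothST F) :
    ContDiffOn ℝ (⊤ : ℕ∞) (fderivWithin ℝ (fun q : ℝ × ℝ => F q.1 q.2) spaceTime) spaceTime :=
  ContDiffOn.fderivWithin hF uniqueDiffOn_spaceTime (by simp)

lemma smooth_dX (hF : SmoothST F) : SmoothST (dX F) :=
  (hF.contDiffOn_fderivWithin.clm_apply contDiffOn_const).congr
    fun _ hq => hF.dX_eq hq.1 hq.2

lemma smooth_dT (hF : SmoothST F) : SmoothST (dT F) :=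
  (hF.contDiffOn_fderivWithin.clm_apply contDiffOn_const).congr
    fun _ hq => hF.dT_eq hq.1 hq.2

lemma dT_dX (hF : SmoothST F) (ht : 0 ≤ t) (hθ : θ ∈ I14) :
    dT (dX F) t θ = dX (dT F) t θ := by
  set f : ℝ × ℝ → ℝ := fun q => F q.1 q.2 with hf
  have hmem : (t, θ) ∈ spaceTime := ⟨ht, hθ⟩
  have hsymm : IsSymmSndFDerivWithinAt ℝ f spaceTime (t, θ) := by
    refine ContDiffWithinAt.isSymmSndFDerivWithinAt (n := 2) ?_ (by simp)
      uniqueDiffOn_spaceTime ?_ hmem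
    · exact (hF _ hmem).of_le (WithTop.coe_le_coe.2 (le_top : (2 : ℕ∞) ≤ ⊤))
    · have hpi := Real.pi_pos
      have : interior spaceTime = Ioi 0 ×ˢ Ioo (-(π/4)) (π/4) := by
        simp [spaceTime, I14, interior_prod_eq]
      rw [this, closure_prod_eq, closure_Ioi, closure_Ioo (by linarith)]
      exact hmem
  have hd := ((hF.contDiffOn_fderivWithin.differentiableOn (by simp)) _ hmem).hasFDerivWithinAt
  have h1 : HasDerivWithinAt (fun s => dX F s θ)
      (fderivWithin ℝ (fderivWithin ℝ f spaceTime) spaceTime (t, θ) (1, 0) (0, 1)) (Ici 0) t :=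
    ((hasDerivWithinAt_slice_T hd hθ).clm_apply
      (hasDerivWithinAt_const t (Ici 0) ((0:ℝ), (1:ℝ)))).congr_deriv (by simp [hf]) |>.congr
        (fun s hs => hF.dX_eq hs hθ) (hF.dX_eq ht hθ)
  have h2 : HasDerivWithinAt (dT F t)
      (fderivWithin ℝ (fderivWithin ℝ f spaceTime) spaceTime (t, θ) (0, 1) (1, 0)) I14 θ :=
    ((hasDerivWithinAt_slice_X hd ht).clm_apply
      (hasDerivWithinAt_const θ I14 ((1:ℝ), (0:ℝ)))).congr_deriv (by simp [hf]) |>.congr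
        (fun s hs => hF.dT_eq ht hs) (hF.dT_eq ht hθ)
  rw [dT, h1.derivWithin (uniqueDiffOn_Ici 0 t ht), dX,
    h2.derivWithin (uniqueDiffOn_I14 θ hθ)]
  exact hsymm _ _

end SmoothST

lemma nonneg_of_weighted_min {a b aT aX v c d : ℝ → ℝ → ℝ} {t θ K L : ℝ} (ht : 0 < t)
    (hθ : θ ∈ Icc (0:ℝ) (π/4)) (hK : 2 * L < K)
    (haT : HasDerivWithinAt (fun s => a s θ) (aT t θ) (Ici 0) t)
    (haX : HasDerivWithinAt (a t) (aX t θ) I14 θ)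
    (heq : aT t θ + v t θ * aX t θ = c t θ * a t θ + d t θ * b t θ)
    (hc : c t θ ≤ L) (hd₀ : 0 ≤ d t θ) (hd : d t θ ≤ L)
    (hv₀ : v t 0 = 0) (hv₁ : v t (π/4) = 0)
    (hmin : ∀ s ∈ Icc 0 t, ∀ ϑ ∈ Icc (0:ℝ) (π/4),
      rexp (-K * t) * a t θ ≤ rexp (-K * s) * a s ϑ)
    (hab : a t θ ≤ b t θ) : 0 ≤ a t θ := by
  by_contra! hneg
  have hvaX : v t θ * aX t θ = 0 := by
    rcases eq_or_lt_of_le hθ.1 with h0 | h0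
    · rw [← h0, hv₀, zero_mul]
    rcases eq_or_lt_of_le hθ.2 with h1 | h1
    · rw [h1, hv₁, zero_mul]
    have hD : HasDerivAt (a t) (aX t θ) θ :=
      haX.hasDerivAt (Icc_mem_nhds (by linarith) h1)
    have hloc : IsLocalMin (a t) θ := by
      filter_upwards [Icc_mem_nhds h0 h1] with ϑ hϑ
      exact le_of_mul_le_mul_left (hmin t ⟨ht.le, le_rfl⟩ ϑ hϑ) (exp_pos _)
    rw [hloc.hasDerivAt_eq_zero hD, mul_zero]
  have hexp : HasDerivAt (fun s => rexp (-K * s)) (rexp (-K * t) * -K) t := by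
    simpa using ((hasDerivAt_id t).const_mul (-K)).exp
  have hT : HasDerivAt (fun s => rexp (-K * s) * a s θ)
      (rexp (-K * t) * -K * a t θ + rexp (-K * t) * aT t θ) t :=
    hexp.mul (haT.hasDerivAt (Ici_mem_nhds ht))
  have hlocT : IsLocalMinOn (fun s => rexp (-K * s) * a s θ) (Icc 0 t) t := by
    filter_upwards [self_mem_nhdsWithin] with s hs using hmin s hs θ hθ
  have hseg : (0 : ℝ) - t ∈ posTangentConeAt (Icc 0 t) t :=
    sub_mem_posTangentConeAt_of_segment_subset (by
      rw [segment_symm, segment_eq_Icc ht.le])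
  have hder := hlocT.hasFDerivWithinAt_nonneg hT.hasDerivWithinAt.hasFDerivWithinAt hseg
  have hder' : 0 ≤ (0 - t) * (rexp (-K * t) * (aT t θ - K * a t θ)) := by
    convert hder using 1
    rw [ContinuousLinearMap.toSpanSingleton_apply, smul_eq_mul]
    ring
  have hle : aT t θ - K * a t θ ≤ 0 := by
    by_contra! hpos
    have := mul_pos ht (mul_pos (exp_pos (-K * t)) hpos)
    linarith
  nlinarith [mul_nonneg (sub_nonneg.2 hc) (neg_nonneg.2 hneg.le),
    mul_nonneg (sub_nonneg.2 hd) (neg_nonneg.2 hneg.le),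
    mul_nonneg hd₀ (sub_nonneg.2 hab), mul_pos (sub_pos.2 hK) (neg_pos.2 hneg)]

/-- Nonnegativity is preserved by a cooperative linear system of transport equations whose
velocity vanishes at both ends of the interval. -/
lemma nonneg_of_cooperative {a b aT aX bT bX v c₁ d₁ c₂ d₂ : ℝ → ℝ → ℝ} {T L : ℝ} (hT : 0 ≤ T)
    (hac : ContinuousOn (fun q : ℝ × ℝ => a q.1 q.2) spaceTime)
    (hbc : ContinuousOn (fun q : ℝ × ℝ => b q.1 q.2) spaceTime)
    (haT : ∀ t ∈ Icc 0 T, ∀ θ ∈ Icc (0:ℝ) (π/4),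
      HasDerivWithinAt (fun s => a s θ) (aT t θ) (Ici 0) t)
    (hbT : ∀ t ∈ Icc 0 T, ∀ θ ∈ Icc (0:ℝ) (π/4),
      HasDerivWithinAt (fun s => b s θ) (bT t θ) (Ici 0) t)
    (haX : ∀ t ∈ Icc 0 T, ∀ θ ∈ Icc (0:ℝ) (π/4), HasDerivWithinAt (a t) (aX t θ) I14 θ)
    (hbX : ∀ t ∈ Icc 0 T, ∀ θ ∈ Icc (0:ℝ) (π/4), HasDerivWithinAt (b t) (bX t θ) I14 θ)
    (heqa : ∀ t ∈ Icc 0 T, ∀ θ ∈ Icc (0:ℝ) (π/4),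
      aT t θ + v t θ * aX t θ = c₁ t θ * a t θ + d₁ t θ * b t θ)
    (heqb : ∀ t ∈ Icc 0 T, ∀ θ ∈ Icc (0:ℝ) (π/4),
      bT t θ + v t θ * bX t θ = c₂ t θ * b t θ + d₂ t θ * a t θ)
    (hc₁ : ∀ t ∈ Icc 0 T, ∀ θ ∈ Icc (0:ℝ) (π/4), c₁ t θ ≤ L)
    (hc₂ : ∀ t ∈ Icc 0 T, ∀ θ ∈ Icc (0:ℝ) (π/4), c₂ t θ ≤ L)
    (hd₁ : ∀ t ∈ Icc 0 T, ∀ θ ∈ Icc (0:ℝ) (π/4), 0 ≤ d₁ t θ ∧ d₁ t θ ≤ L)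
    (hd₂ : ∀ t ∈ Icc 0 T, ∀ θ ∈ Icc (0:ℝ) (π/4), 0 ≤ d₂ t θ ∧ d₂ t θ ≤ L)
    (hv₀ : ∀ t ∈ Icc 0 T, v t 0 = 0) (hv₁ : ∀ t ∈ Icc 0 T, v t (π/4) = 0)
    (ha₀ : ∀ θ ∈ Icc (0:ℝ) (π/4), 0 ≤ a 0 θ) (hb₀ : ∀ θ ∈ Icc (0:ℝ) (π/4), 0 ≤ b 0 θ) :
    ∀ t ∈ Icc 0 T, ∀ θ ∈ Icc (0:ℝ) (π/4), 0 ≤ a t θ ∧ 0 ≤ b t θ := by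
  set K : ℝ := 2 * L + 1
  have hK : 2 * L < K := by simp [K]
  have hpi := Real.pi_pos
  have hcomp : IsCompact (Icc 0 T ×ˢ Icc (0:ℝ) (π/4)) := isCompact_Icc.prod isCompact_Icc
  have hsub : Icc 0 T ×ˢ Icc (0:ℝ) (π/4) ⊆ spaceTime :=
    prod_mono Icc_subset_Ici_self Icc_subset_I14
  have hcont : ContinuousOn
      (fun q : ℝ × ℝ => rexp (-K * q.1) * min (a q.1 q.2) (b q.1 q.2))
      (Icc 0 T ×ˢ Icc (0:ℝ) (π/4)) :=
    ContinuousOn.mul (by fun_prop) (ContinuousOn.inf (hac.mono hsub) (hbc.mono hsub))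
  obtain ⟨⟨t, θ⟩, ⟨ht, hθ⟩, hmin⟩ := hcomp.exists_isMinOn
    ⟨(0, 0), ⟨⟨le_rfl, hT⟩, ⟨le_rfl, by positivity⟩⟩⟩ hcont
  simp only at ht hθ
  have hmin' : ∀ s ∈ Icc 0 T, ∀ ϑ ∈ Icc (0:ℝ) (π/4),
      rexp (-K * t) * min (a t θ) (b t θ) ≤ rexp (-K * s) * min (a s ϑ) (b s ϑ) :=
    fun s hs ϑ hϑ => hmin (show ((s, ϑ) : ℝ × ℝ) ∈ _ from ⟨hs, hϑ⟩)
  have hkey : 0 ≤ min (a t θ) (b t θ) := by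
    rcases eq_or_lt_of_le ht.1 with h0 | h0
    · rw [← h0]
      exact le_min (ha₀ θ hθ) (hb₀ θ hθ)
    rcases le_total (a t θ) (b t θ) with hab | hab
    · rw [min_eq_left hab] at hmin' ⊢
      exact nonneg_of_weighted_min h0 hθ hK (haT t ht θ hθ) (haX t ht θ hθ) (heqa t ht θ hθ)
        (hc₁ t ht θ hθ) (hd₁ t ht θ hθ).1 (hd₁ t ht θ hθ).2 (hv₀ t ht) (hv₁ t ht)
        (fun s hs ϑ hϑ => (hmin' s ⟨hs.1, hs.2.trans ht.2⟩ ϑ hϑ).trans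
          (mul_le_mul_of_nonneg_left (min_le_left _ _) (exp_pos _).le)) hab
    · rw [min_eq_right hab] at hmin' ⊢
      exact nonneg_of_weighted_min h0 hθ hK (hbT t ht θ hθ) (hbX t ht θ hθ) (heqb t ht θ hθ)
        (hc₂ t ht θ hθ) (hd₂ t ht θ hθ).1 (hd₂ t ht θ hθ).2 (hv₀ t ht) (hv₁ t ht)
        (fun s hs ϑ hϑ => (hmin' s ⟨hs.1, hs.2.trans ht.2⟩ ϑ hϑ).trans
          (mul_le_mul_of_nonneg_left (min_le_right _ _) (exp_pos _).le)) hab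
  intro s hs ϑ hϑ
  have h := (mul_nonneg (exp_pos (-K * t)).le hkey).trans (hmin' s hs ϑ hϑ)
  exact le_min_iff.1 (nonneg_of_mul_nonneg_right h (exp_pos _))

lemma monotoneOn_Icc_of_hasDerivWithinAt_I14 {f f' : ℝ → ℝ}
    (h : ∀ x ∈ Icc (0:ℝ) (π/4), HasDerivWithinAt f (f' x) I14 x)
    (h₀ : ∀ x ∈ Icc (0:ℝ) (π/4), 0 ≤ f' x) : MonotoneOn f (Icc (0:ℝ) (π/4)) :=
  monotoneOn_of_hasDerivWithinAt_nonneg (convex_Icc _ _)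
    (fun x hx => (h x hx).continuousWithinAt.mono Icc_subset_I14)
    (fun x hx => (h x (interior_subset hx)).mono (interior_subset.trans Icc_subset_I14))
    (fun x hx => h₀ x (interior_subset hx))

/-- The differential inequalities `p' ≥ M p / 2`, `M' ≥ κ p` with `p > 0`, `M ≥ 0` have no
global solution. -/
lemma no_global_of_differential_ineq {p M p' M' : ℝ → ℝ} {κ : ℝ} (hκ : 0 < κ)
    (hp : ∀ t > 0, HasDerivAt p (p' t) t) (hM : ∀ t > 0, HasDerivAt M (M' t) t)
    (hpos : ∀ t > 0, 0 < p t) (hM₀ : ∀ t > 0, 0 ≤ M t)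
    (hp' : ∀ t > 0, M t * p t / 2 ≤ p' t) (hM' : ∀ t > 0, κ * p t ≤ M' t) : False := by
  have mono : ∀ {f f' : ℝ → ℝ} (c : ℝ), 0 < c → (∀ t ≥ c, HasDerivAt f (f' t) t) →
      (∀ t ≥ c, 0 ≤ f' t) → MonotoneOn f (Ici c) := fun c _ h h0 =>
    monotoneOn_of_hasDerivWithinAt_nonneg (convex_Ici c)
      (fun x hx => (h x hx).continuousAt.continuousWithinAt)
      (fun x hx => (h x (interior_subset hx)).hasDerivWithinAt)
      (fun x hx => h0 x (interior_subset hx))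
  have hpc : ContinuousOn p (Ioi 0) := fun t ht => (hp t ht).continuousAt.continuousWithinAt
  set N : ℝ → ℝ := fun t => κ * ∫ s in (1:ℝ)..t, p s with hN
  have hN' : ∀ t > 0, HasDerivAt N (κ * p t) t := by
    intro t ht
    refine HasDerivAt.const_mul κ ?_
    refine intervalIntegral.integral_hasDerivAt_right ?_ ?_ (hp t ht).continuousAt
    · refine (hpc.mono fun x hx => ?_).intervalIntegrable
      exact lt_of_lt_of_le (lt_min one_pos ht) hx.1
    · exact hpc.stronglyMeasurableAtFilter isOpen_Ioi t ht
  have hN1 : N 1 = 0 := by simp [hN]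
  have hNM : ∀ t ≥ 1, N t ≤ M t := by
    intro t ht
    have := mono (f := fun t => M t - N t) 1 one_pos
      (fun s hs => (hM s (by linarith)).sub (hN' s (by linarith)))
      (fun s hs => sub_nonneg.2 (hM' s (by linarith))) self_mem_Ici ht ht
    have h1 := hM₀ 1 one_pos
    simp only [hN1] at this
    linarith
  have hpN : ∀ t ≥ 1, p 1 + N t ^ 2 / (4 * κ) ≤ p t := by
    intro t ht
    have := mono (f := fun t => p t - N t ^ 2 / (4 * κ)) 1 one_pos
      (fun s hs => (hp s (by linarith)).sub (((hN' s (by linarith)).pow 2).div_const (4 * κ)))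
      (fun s hs => by
        have h1 := hp' s (by linarith)
        have h2 := mul_le_mul_of_nonneg_right (hNM s hs) (hpos s (by linarith)).le
        have h3 : (((2 : ℕ) : ℝ) * N s ^ (2 - 1) * (κ * p s)) / (4 * κ) = N s * p s / 2 := by
          field_simp
          norm_num
          ring
        rw [h3]
        linarith) self_mem_Ici ht ht
    simp only [hN1] at this
    norm_num at this
    linarith
  have hp1 := hpos 1 one_pos
  have hN2 : 0 < N 2 := by
    have := mono (f := fun t => N t - κ * p 1 * t) 1 one_pos
      (fun s hs => (hN' s (by linarith)).sub ((hasDerivAt_id s).const_mul (κ * p 1)))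
      (fun s hs => by
        have h1 : 0 ≤ N s ^ 2 / (4 * κ) := by positivity
        have := mul_le_mul_of_nonneg_left (show p 1 ≤ p s by linarith [hpN s hs]) hκ.le
        linarith) self_mem_Ici (show (2:ℝ) ∈ Ici 1 by norm_num) (by norm_num)
    have := mul_pos hκ hp1
    simp only [hN1] at *
    linarith
  have hNpos : ∀ t ≥ 2, 0 < N t := by
    intro t ht
    have := mono (f := N) 2 two_pos (fun s hs => hN' s (by linarith))
      (fun s hs => (mul_pos hκ (hpos s (by linarith))).le) self_mem_Ici ht ht
    linarith
  have hinv : ∀ t ≥ 2, -(N 2)⁻¹ ≤ -(N t)⁻¹ - (t - 2) / 4 := by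
    intro t ht
    have := mono (f := fun t => -(N t)⁻¹ - (t - 2) / 4) 2 two_pos
      (fun s hs => ((hN' s (by linarith)).inv (hNpos s hs).ne').neg.sub
        (((hasDerivAt_id s).sub_const 2).div_const 4))
      (fun s hs => by
        have h1 := hNpos s hs
        have h2 := hpN s (by linarith)
        have h3 : N s ^ 2 / 4 ≤ κ * p s := by
          have := mul_le_mul_of_nonneg_left h2 hκ.le
          have h4 : κ * (p 1 + N s ^ 2 / (4 * κ)) = κ * p 1 + N s ^ 2 / 4 := by
            field_simp
          have := mul_pos hκ hp1
          linarith
        have h5 : 1 / 4 ≤ κ * p s / N s ^ 2 := by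
          rw [le_div_iff₀ (by positivity)]
          linarith
        rw [neg_div]
        linarith) self_mem_Ici ht ht
    simpa using this
  have h := hinv (2 + 4 * (N 2)⁻¹) (by simp [hN2.le])
  have h' := inv_pos.2 (hNpos (2 + 4 * (N 2)⁻¹) (by simp [hN2.le]))
  linarith

lemma integral_eq_sub_of_hasDerivWithinAt_I14 {f f' : ℝ → ℝ}
    (h : ∀ x ∈ I14, HasDerivWithinAt f (f' x) I14 x)
    (hc : ContinuousOn f' I14) : ∫ x in (0:ℝ)..(π/4), f' x = f (π/4) - f 0 := by
  have hpi := Real.pi_pos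
  have hle : (0:ℝ) ≤ π/4 := by positivity
  refine intervalIntegral.integral_eq_sub_of_hasDerivAt_of_le hle
    (fun x hx => (h x (mem_I14_of_mem hx)).continuousWithinAt.mono Icc_subset_I14)
    (fun x hx => (h x (mem_I14_of_mem (Ioo_subset_Icc_self hx))).hasDerivAt
      (Icc_mem_nhds (by linarith [hx.1]) hx.2)) ?_
  exact ContinuousOn.intervalIntegrable_of_Icc hle (hc.mono Icc_subset_I14)

/-- If `f'' + 4 f = h` and `w'' + 4 w = 0` then `(w f' - w' f)' = w h`. Here
`w = α sin 2θ + β cos 2θ`. -/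
lemma hasDerivWithinAt_wronskian {f f₁ h : ℝ → ℝ} {s : Set ℝ} {θ : ℝ} (α β : ℝ)
    (hf : HasDerivWithinAt f (f₁ θ) s θ)
    (hf₁ : HasDerivWithinAt f₁ (h θ - 4 * f θ) s θ) :
    HasDerivWithinAt
      (fun x => (α * sin (2 * x) + β * cos (2 * x)) * f₁ x
        - (2 * α * cos (2 * x) - 2 * β * sin (2 * x)) * f x)
      ((α * sin (2 * θ) + β * cos (2 * θ)) * h θ) s θ := by
  have h2 : HasDerivAt (fun x : ℝ => 2 * x) 2 θ := by
    simpa using (hasDerivAt_id θ).const_mul (2:ℝ)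
  have hs := h2.sin
  have hc := h2.cos
  have hw := ((hs.const_mul α).add (hc.const_mul β)).hasDerivWithinAt (s := s)
  have hw' := ((hc.const_mul (2 * α)).sub (hs.const_mul (2 * β))).hasDerivWithinAt (s := s)
  refine ((hw.mul hf₁).sub (hw'.mul hf)).congr_deriv ?_
  simp only [Pi.add_apply, Pi.sub_apply]
  ring

section Elliptic

variable {f f₁ h : ℝ → ℝ}

lemma abs_deriv_le_of_elliptic
    (hf : ∀ θ ∈ I14, HasDerivWithinAt f (f₁ θ) I14 θ)
    (hf₁ : ∀ θ ∈ I14, HasDerivWithinAt f₁ (h θ - 4 * f θ) I14 θ)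
    (hf0 : f 0 = 0) (hfpi : f (π/4) = 0)
    {K : ℝ} (hK : ∀ θ ∈ I14, |h θ| ≤ K) :
    ∀ θ ∈ I14, |f₁ θ| ≤ 3 * K := by
  intro θ hθ
  have hpi := Real.pi_pos
  have hpi4 := Real.pi_le_four
  have h0 : (0:ℝ) ∈ I14 := mem_I14_of_mem ⟨le_rfl, by positivity⟩
  have h1 : π/4 ∈ I14 := mem_I14_of_mem ⟨by positivity, le_rfl⟩
  have hK0 : 0 ≤ K := (abs_nonneg _).trans (hK 0 h0)
  have hθ' : |θ| ≤ 1 := abs_le.2 ⟨by linarith [hθ.1], by linarith [hθ.2]⟩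
  have hθ'' : |θ - π/4| ≤ 2 := abs_le.2 ⟨by linarith [hθ.1], by linarith [hθ.2]⟩
  have hU := Convex.norm_image_sub_le_of_norm_hasDerivWithin_le (C := K)
    (fun x hx => hasDerivWithinAt_wronskian 1 0 (hf x hx) (hf₁ x hx))
    (fun x hx => by
      simp only [one_mul, zero_mul, add_zero, norm_eq_abs, abs_mul]
      exact (mul_le_of_le_one_left (abs_nonneg _) (abs_sin_le_one _)).trans (hK x hx))
    (convex_Icc _ _) h0 hθ
  have hV := Convex.norm_image_sub_le_of_norm_hasDerivWithin_le (C := K)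
    (fun x hx => hasDerivWithinAt_wronskian 0 1 (hf x hx) (hf₁ x hx))
    (fun x hx => by
      simp only [one_mul, zero_mul, zero_add, norm_eq_abs, abs_mul]
      exact (mul_le_of_le_one_left (abs_nonneg _) (abs_cos_le_one _)).trans (hK x hx))
    (convex_Icc _ _) h1 hθ
  have e : 2 * (π/4) = π/2 := by ring
  simp [hf0] at hU
  simp [hfpi, e] at hV
  have hU' := hU.trans (mul_le_of_le_one_right hK0 hθ')
  have hV' := hV.trans (mul_le_mul_of_nonneg_left hθ'' hK0)
  have hid : f₁ θ = sin (2 * θ) * (sin (2 * θ) * f₁ θ - 2 * cos (2 * θ) * f θ)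
      + cos (2 * θ) * (cos (2 * θ) * f₁ θ + 2 * sin (2 * θ) * f θ) := by
    linear_combination (-f₁ θ) * sin_sq_add_cos_sq (2 * θ)
  rw [hid]
  refine (abs_add_le _ _).trans ?_
  rw [abs_mul, abs_mul]
  have := mul_le_of_le_one_left (abs_nonneg
    (sin (2 * θ) * f₁ θ - 2 * cos (2 * θ) * f θ)) (abs_sin_le_one (2 * θ))
  have := mul_le_of_le_one_left (abs_nonneg
    (cos (2 * θ) * f₁ θ + 2 * sin (2 * θ) * f θ)) (abs_cos_le_one (2 * θ))
  linarith

lemma deriv_zero_nonpos_of_elliptic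
    (hf : ∀ θ ∈ I14, HasDerivWithinAt f (f₁ θ) I14 θ)
    (hf₁ : ∀ θ ∈ I14, HasDerivWithinAt f₁ (h θ - 4 * f θ) I14 θ)
    (hf0 : f 0 = 0) (hfpi : f (π/4) = 0)
    (hpos : ∀ θ ∈ Icc (0:ℝ) (π/4), 0 ≤ h θ) : f₁ 0 ≤ 0 := by
  have hpi := Real.pi_pos
  have hle : (0:ℝ) ≤ π/4 := by positivity
  have e : 2 * (π/4) = π/2 := by ring
  have hmono := monotoneOn_Icc_of_hasDerivWithinAt_I14
    (fun x hx => hasDerivWithinAt_wronskian 0 1 (hf x (mem_I14_of_mem hx))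
      (hf₁ x (mem_I14_of_mem hx)))
    (fun x hx => by
      simp only [one_mul, zero_mul, zero_add]
      exact mul_nonneg (cos_nonneg_of_mem_Icc ⟨by linarith [hx.1], by linarith [hx.2]⟩)
        (hpos x hx))
    ⟨le_rfl, hle⟩ ⟨hle, le_rfl⟩ hle
  simpa [hfpi, hf0, e] using hmono

lemma deriv_add_nonneg_of_elliptic
    (hf : ∀ θ ∈ I14, HasDerivWithinAt f (f₁ θ) I14 θ)
    (hf₁ : ∀ θ ∈ I14, HasDerivWithinAt f₁ (h θ - 4 * f θ) I14 θ)
    (hf0 : f 0 = 0) (hfpi : f (π/4) = 0)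
    (hmono : MonotoneOn h (Icc (0:ℝ) (π/4))) :
    0 ≤ f₁ (π/4) + f₁ 0 := by
  have hpi := Real.pi_pos
  have hle : (0:ℝ) ≤ π/4 := by positivity
  have e : 2 * (π/4) = π/2 := by ring
  have hm : π/8 ∈ Icc (0:ℝ) (π/4) := ⟨by positivity, by linarith⟩
  have hd : ∀ x : ℝ, HasDerivAt (fun y : ℝ => h (π/8) / 2 * (cos (2 * y) + sin (2 * y)))
      (h (π/8) * (cos (2 * x) - sin (2 * x))) x := by
    intro x
    have h2 : HasDerivAt (fun x : ℝ => 2 * x) 2 x := by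
      simpa using (hasDerivAt_id x).const_mul (2:ℝ)
    refine ((h2.cos.add h2.sin).const_mul (h (π/8) / 2)).congr_deriv ?_
    ring
  have key := monotoneOn_Icc_of_hasDerivWithinAt_I14
    (fun x hx => (hasDerivWithinAt_wronskian 1 (-1) (hf x (mem_I14_of_mem hx))
      (hf₁ x (mem_I14_of_mem hx))).add (hd x).hasDerivWithinAt)
    (fun x hx => by
      have hid : (1 * sin (2 * x) + -1 * cos (2 * x)) * h x
          + h (π/8) * (cos (2 * x) - sin (2 * x))
          = (sin (2 * x) - sin (π/2 - 2 * x)) * (h x - h (π/8)) := by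
        rw [sin_pi_div_two_sub]
        ring
      rw [hid]
      rcases le_total x (π/8) with hx8 | hx8
      · refine mul_nonneg_of_nonpos_of_nonpos (sub_nonpos.2 ?_)
          (sub_nonpos.2 (hmono hx hm hx8))
        exact sin_le_sin_of_le_of_le_pi_div_two (by linarith [hx.1]) (by linarith [hx.1])
          (by linarith)
      · refine mul_nonneg (sub_nonneg.2 ?_) (sub_nonneg.2 (hmono hm hx hx8))
        exact sin_le_sin_of_le_of_le_pi_div_two (by linarith [hx.2]) (by linarith [hx.2])
          (by linarith))
    ⟨le_rfl, hle⟩ ⟨hle, le_rfl⟩ hle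
  simp [hfpi, hf0, e] at key
  linarith

lemma integral_le_of_elliptic
    (hf : ∀ θ ∈ I14, HasDerivWithinAt f (f₁ θ) I14 θ)
    (hf₁ : ∀ θ ∈ I14, HasDerivWithinAt f₁ (h θ - 4 * f θ) I14 θ)
    (hf0 : f 0 = 0) (hfpi : f (π/4) = 0)
    (hpos : ∀ θ ∈ Icc (0:ℝ) (π/4), 0 ≤ h θ) (hc : ContinuousOn h I14) :
    ∫ θ in (0:ℝ)..(π/4), h θ ≤ f₁ (π/4) - f₁ 0 := by
  have hpi := Real.pi_pos
  have hle : (0:ℝ) ≤ π/4 := by positivity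
  have e : 2 * (π/4) = π/2 := by ring
  have hc' : ContinuousOn (fun θ => (1 * sin (2 * θ) + 1 * cos (2 * θ)) * h θ) I14 :=
    ContinuousOn.mul (by fun_prop) hc
  have hint := integral_eq_sub_of_hasDerivWithinAt_I14
    (fun x hx => hasDerivWithinAt_wronskian 1 1 (hf x hx) (hf₁ x hx)) hc'
  have hmono : ∫ θ in (0:ℝ)..(π/4), h θ
      ≤ ∫ θ in (0:ℝ)..(π/4), (1 * sin (2 * θ) + 1 * cos (2 * θ)) * h θ := by
    refine intervalIntegral.integral_mono_on hle
      (ContinuousOn.intervalIntegrable_of_Icc hle (hc.mono Icc_subset_I14))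
      (ContinuousOn.intervalIntegrable_of_Icc hle (hc'.mono Icc_subset_I14)) fun x hx => ?_
    refine le_mul_of_one_le_left (hpos x hx) ?_
    have h1 : 0 ≤ sin (2 * x) :=
      sin_nonneg_of_nonneg_of_le_pi (by linarith [hx.1]) (by linarith [hx.2])
    have h2 : 0 ≤ cos (2 * x) :=
      cos_nonneg_of_mem_Icc ⟨by linarith [hx.1], by linarith [hx.2]⟩
    nlinarith [sin_sq_add_cos_sq (2 * x), mul_nonneg h1 h2]
  refine hmono.trans (hint.trans_le ?_)
  simp [hfpi, hf0, e]

end Elliptic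

lemma SmoothST.continuousOn_slice {F : ℝ → ℝ → ℝ} (hF : SmoothST F) {t : ℝ} (ht : 0 ≤ t) :
    ContinuousOn (F t) I14 :=
  fun _ hθ => (hF.hasDeriv_X ht hθ).continuousWithinAt

lemma SmoothST.exists_bound {F : ℝ → ℝ → ℝ} (hF : SmoothST F) (T : ℝ) :
    ∃ C, ∀ t ∈ Icc 0 T, ∀ θ ∈ I14, |F t θ| ≤ C := by
  have hcomp : IsCompact (Icc 0 T ×ˢ I14) := isCompact_Icc.prod isCompact_Icc
  obtain ⟨C, hC⟩ := hcomp.exists_bound_of_continuousOn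
    (ContDiffOn.continuousOn hF |>.mono (prod_mono Icc_subset_Ici_self subset_rfl))
  exact ⟨C, fun t ht θ hθ => hC (t, θ) ⟨ht, hθ⟩⟩

lemma SmoothST.hasDerivAt_integral {F : ℝ → ℝ → ℝ} (hF : SmoothST F) {t : ℝ} (ht : 0 < t) :
    HasDerivAt (fun s => ∫ θ in (0:ℝ)..(π/4), F s θ) (∫ θ in (0:ℝ)..(π/4), dT F t θ) t := by
  have hle : (0:ℝ) ≤ π/4 := by positivity
  obtain ⟨C, hC⟩ := hF.smooth_dT.exists_bound (2 * t)
  have hint : ∀ {H : ℝ → ℝ → ℝ}, SmoothST H → ∀ s, 0 ≤ s →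
      IntervalIntegrable (H s) volume 0 (π/4) := fun hH s hs =>
    ContinuousOn.intervalIntegrable_of_Icc hle ((hH.continuousOn_slice hs).mono Icc_subset_I14)
  have hmem : ∀ {θ : ℝ}, θ ∈ uIoc 0 (π/4) → θ ∈ I14 := fun hθ => by
    rw [uIoc_of_le hle] at hθ
    exact mem_I14_of_mem (Ioc_subset_Icc_self hθ)
  refine (intervalIntegral.hasDerivAt_integral_of_dominated_loc_of_deriv_le
    (F' := dT F) (s := Ioo 0 (2 * t)) (bound := fun _ => C)
    (Ioo_mem_nhds ht (by linarith)) ?_ (hint hF t ht.le) ?_ ?_ (by simp) ?_).2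
  · filter_upwards [Ioi_mem_nhds ht] with s hs
    exact (hint hF s (le_of_lt hs)).def'.aestronglyMeasurable
  · exact (hint hF.smooth_dT t ht.le).def'.aestronglyMeasurable
  · exact ae_of_all _ fun θ hθ s hs => hC s ⟨hs.1.le, hs.2.le⟩ θ (hmem hθ)
  · exact ae_of_all _ fun θ hθ s hs =>
      (hF.hasDeriv_T hs.1.le (hmem hθ)).hasDerivAt (Ici_mem_nhds hs.1)

namespace OneDSol

variable {g P G : ℝ → ℝ → ℝ} {t θ : ℝ}

lemma hasDeriv_G (h : OneDSol (Ici 0) g P G) (ht : 0 ≤ t) (hθ : θ ∈ I14) :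
    HasDerivWithinAt (G t) (dX G t θ) I14 θ :=
  ((h.G_C2 t ht).differentiableOn (by simp) θ hθ).hasDerivWithinAt

lemma hasDeriv_dX_G (h : OneDSol (Ici 0) g P G) (ht : 0 ≤ t) (hθ : θ ∈ I14) :
    HasDerivWithinAt (dX G t) (g t θ - 4 * G t θ) I14 θ := by
  have hd : DifferentiableOn ℝ (dX G t) I14 :=
    ((h.G_C2 t ht).derivWithin uniqueDiffOn_I14 (m := 1) (by norm_num)).differentiableOn (by simp)
  refine (hd θ hθ).hasDerivWithinAt.congr_deriv ?_
  have := h.G_eq t ht θ hθ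
  have h2 : iteratedDerivWithin 2 (G t) I14 θ = derivWithin (dX G t) I14 θ := by
    rw [iteratedDerivWithin_succ]
    exact derivWithin_congr (fun x _ => congrFun iteratedDerivWithin_one x)
      (congrFun iteratedDerivWithin_one θ)
  linarith

lemma G_zero (h : OneDSol (Ici 0) g P G) (ht : 0 ≤ t) : G t 0 = 0 := by
  have := h.G_odd t ht 0 (mem_I14_of_mem ⟨le_rfl, by positivity⟩)
  simp only [neg_zero] at this
  linarith

lemma g_zero (h : OneDSol (Ici 0) g P G) (ht : 0 ≤ t) : g t 0 = 0 := by
  have := h.g_odd t ht 0 (mem_I14_of_mem ⟨le_rfl, by positivity⟩)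
  simp only [neg_zero] at this
  linarith

lemma dT_g (h : OneDSol (Ici 0) g P G) (ht : 0 ≤ t) (hθ : θ ∈ I14) :
    dT g t θ = sin θ * P t θ + cos θ * dX P t θ - 2 * G t θ * dX g t θ :=
  eq_sub_of_add_eq (h.eq_g t ht θ hθ)

lemma dT_P (h : OneDSol (Ici 0) g P G) (ht : 0 ≤ t) (hθ : θ ∈ I14) :
    dT P t θ = P t θ * dX G t θ - 2 * G t θ * dX P t θ :=
  eq_sub_of_add_eq (h.eq_P t ht θ hθ)

lemma dT_dX_g (h : OneDSol (Ici 0) g P G) (hg : SmoothST g) (hP : SmoothST P) (ht : 0 ≤ t)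
    (hθ : θ ∈ I14) :
    dT (dX g) t θ + 2 * G t θ * dX (dX g) t θ
      = -2 * dX G t θ * dX g t θ + cos θ * (P t θ + dX (dX P) t θ) := by
  have key := (((((hasDerivAt_sin θ).hasDerivWithinAt (s := I14)).mul (hP.hasDeriv_X ht hθ)).add
    (((hasDerivAt_cos θ).hasDerivWithinAt (s := I14)).mul (hP.smooth_dX.hasDeriv_X ht hθ))).sub
    (((h.hasDeriv_G ht hθ).const_mul 2).mul (hg.smooth_dX.hasDeriv_X ht hθ))).congr
    (fun x hx => h.dT_g ht hx) (h.dT_g ht hθ)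
  rw [hg.dT_dX ht hθ, dX, key.derivWithin (uniqueDiffOn_I14 θ hθ)]
  ring

lemma dT_dX_P (h : OneDSol (Ici 0) g P G) (hP : SmoothST P) (ht : 0 ≤ t)
    (hθ : θ ∈ I14) :
    dT (dX P) t θ = -(dX G t θ * dX P t θ) + P t θ * (g t θ - 4 * G t θ)
      - 2 * G t θ * dX (dX P) t θ := by
  have key := (((hP.hasDeriv_X ht hθ).mul (h.hasDeriv_dX_G ht hθ)).sub
    (((h.hasDeriv_G ht hθ).const_mul 2).mul (hP.smooth_dX.hasDeriv_X ht hθ))).congr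
    (fun x hx => h.dT_P ht hx) (h.dT_P ht hθ)
  rw [hP.dT_dX ht hθ, dX, key.derivWithin (uniqueDiffOn_I14 θ hθ)]
  ring

lemma dT_dX_dX_P (h : OneDSol (Ici 0) g P G) (hg : SmoothST g) (hP : SmoothST P) (ht : 0 ≤ t)
    (hθ : θ ∈ I14) :
    dT (dX (dX P)) t θ + 2 * G t θ * dX (dX (dX P)) t θ
      = -3 * dX G t θ * dX (dX P) t θ + P t θ * (dX g t θ - 4 * dX G t θ) := by
  have key := (((((h.hasDeriv_dX_G ht hθ).mul (hP.smooth_dX.hasDeriv_X ht hθ)).neg).add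
    ((hP.hasDeriv_X ht hθ).mul ((hg.hasDeriv_X ht hθ).sub
      ((h.hasDeriv_G ht hθ).const_mul 4)))).sub
    (((h.hasDeriv_G ht hθ).const_mul 2).mul (hP.smooth_dX.smooth_dX.hasDeriv_X ht hθ))).congr
    (fun x hx => h.dT_dX_P hP ht hx) (h.dT_dX_P hP ht hθ)
  rw [hP.smooth_dX.dT_dX ht hθ, dX, key.derivWithin (uniqueDiffOn_I14 θ hθ)]
  simp only [Pi.sub_apply]
  ring

lemma exists_bound_dX_G (h : OneDSol (Ici 0) g P G) (hg : SmoothST g) (T : ℝ) :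
    ∃ C, 0 ≤ C ∧ ∀ t ∈ Icc 0 T, ∀ θ ∈ I14, |dX G t θ| ≤ C := by
  obtain ⟨C, hC⟩ := hg.exists_bound T
  refine ⟨3 * |C|, by positivity, fun t ht => ?_⟩
  exact abs_deriv_le_of_elliptic (fun x hx => h.hasDeriv_G ht.1 hx)
    (fun x hx => h.hasDeriv_dX_G ht.1 hx) (h.G_zero ht.1) (h.G_bc₁ t ht.1)
    (fun x hx => (hC t ht x hx).trans (le_abs_self C))

lemma P_nonneg (h : OneDSol (Ici 0) g P G) (hg : SmoothST g) (hP : SmoothST P)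
    (h₀ : ∀ θ ∈ Icc (0:ℝ) (π/4), 0 ≤ P 0 θ) (ht : 0 ≤ t) (hθ : θ ∈ Icc (0:ℝ) (π/4)) :
    0 ≤ P t θ := by
  obtain ⟨C, hC0, hC⟩ := h.exists_bound_dX_G hg t
  have hI := @mem_I14_of_mem
  have heq : ∀ s ∈ Icc 0 t, ∀ ϑ ∈ Icc (0:ℝ) (π/4),
      dT P s ϑ + (2 * G s ϑ) * dX P s ϑ = dX G s ϑ * P s ϑ + 0 * P s ϑ := by
    intro s hs ϑ hϑ
    rw [h.dT_P hs.1 (hI hϑ)]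
    ring
  have hc : ∀ s ∈ Icc 0 t, ∀ ϑ ∈ Icc (0:ℝ) (π/4), dX G s ϑ ≤ C :=
    fun s hs ϑ hϑ => (le_abs_self _).trans (hC s hs ϑ (hI hϑ))
  exact (nonneg_of_cooperative (v := fun s ϑ => 2 * G s ϑ) (d₁ := fun _ _ => 0)
    (d₂ := fun _ _ => 0) (L := C) ht (ContDiffOn.continuousOn hP) (ContDiffOn.continuousOn hP)
    (fun s hs ϑ hϑ => hP.hasDeriv_T hs.1 (hI hϑ)) (fun s hs ϑ hϑ => hP.hasDeriv_T hs.1 (hI hϑ))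
    (fun s hs ϑ hϑ => hP.hasDeriv_X hs.1 (hI hϑ)) (fun s hs ϑ hϑ => hP.hasDeriv_X hs.1 (hI hϑ))
    heq heq hc hc (fun _ _ _ _ => ⟨le_rfl, hC0⟩) (fun _ _ _ _ => ⟨le_rfl, hC0⟩)
    (fun s hs => by simp [h.G_zero hs.1]) (fun s hs => by simp [h.G_bc₁ s hs.1])
    h₀ h₀ t ⟨ht, le_rfl⟩ θ hθ).1

lemma dX_g_nonneg (h : OneDSol (Ici 0) g P G) (hg : SmoothST g) (hP : SmoothST P)
    (hP₀ : ∀ θ ∈ Icc (0:ℝ) (π/4), 0 ≤ P 0 θ)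
    (hg₀ : ∀ θ ∈ Icc (0:ℝ) (π/4), 0 ≤ dX g 0 θ)
    (hPP₀ : ∀ θ ∈ Icc (0:ℝ) (π/4), 0 ≤ P 0 θ + dX (dX P) 0 θ)
    (ht : 0 ≤ t) (hθ : θ ∈ Icc (0:ℝ) (π/4)) : 0 ≤ dX g t θ := by
  obtain ⟨C, hC0, hC⟩ := h.exists_bound_dX_G hg t
  obtain ⟨B, hB⟩ := hP.exists_bound t
  have hI := @mem_I14_of_mem
  have hB0 : 0 ≤ B := (abs_nonneg _).trans (hB t ⟨ht, le_rfl⟩ θ (hI hθ))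
  have habs : ∀ s ∈ Icc 0 t, ∀ ϑ ∈ Icc (0:ℝ) (π/4), -C ≤ dX G s ϑ :=
    fun s hs ϑ hϑ => (abs_le.1 (hC s hs ϑ (hI hϑ))).1
  refine (nonneg_of_cooperative (a := dX g) (b := fun s ϑ => P s ϑ + dX (dX P) s ϑ)
    (aT := dT (dX g)) (bT := fun s ϑ => dT P s ϑ + dT (dX (dX P)) s ϑ)
    (aX := dX (dX g)) (bX := fun s ϑ => dX P s ϑ + dX (dX (dX P)) s ϑ)
    (v := fun s ϑ => 2 * G s ϑ) (c₁ := fun s ϑ => -2 * dX G s ϑ) (d₁ := fun _ ϑ => cos ϑ)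
    (c₂ := fun s ϑ => -3 * dX G s ϑ) (d₂ := P) (L := 3 * C + 1 + B) ht
    (ContDiffOn.continuousOn hg.smooth_dX)
    ((ContDiffOn.continuousOn hP).add (ContDiffOn.continuousOn hP.smooth_dX.smooth_dX))
    (fun s hs ϑ hϑ => hg.smooth_dX.hasDeriv_T hs.1 (hI hϑ))
    (fun s hs ϑ hϑ => (hP.hasDeriv_T hs.1 (hI hϑ)).add
      (hP.smooth_dX.smooth_dX.hasDeriv_T hs.1 (hI hϑ)))
    (fun s hs ϑ hϑ => hg.smooth_dX.hasDeriv_X hs.1 (hI hϑ))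
    (fun s hs ϑ hϑ => (hP.hasDeriv_X hs.1 (hI hϑ)).add
      (hP.smooth_dX.smooth_dX.hasDeriv_X hs.1 (hI hϑ)))
    (fun s hs ϑ hϑ => h.dT_dX_g hg hP hs.1 (hI hϑ)) ?_
    (fun s hs ϑ hϑ => by linarith [habs s hs ϑ hϑ]) (fun s hs ϑ hϑ => by linarith [habs s hs ϑ hϑ])
    (fun s hs ϑ hϑ => ⟨?_, ?_⟩) (fun s hs ϑ hϑ => ⟨h.P_nonneg hg hP hP₀ hs.1 hϑ, ?_⟩)
    (fun s hs => by simp [h.G_zero hs.1]) (fun s hs => by simp [h.G_bc₁ s hs.1])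
    hg₀ hPP₀ t ⟨ht, le_rfl⟩ θ hθ).1
  · intro s hs ϑ hϑ
    linear_combination h.dT_dX_dX_P hg hP hs.1 (hI hϑ) + h.dT_P hs.1 (hI hϑ)
  · exact cos_nonneg_of_mem_Icc ⟨by linarith [hϑ.1, pi_pos], by linarith [hϑ.2, pi_pos]⟩
  · linarith [cos_le_one ϑ]
  · linarith [(abs_le.1 (hB s hs ϑ (hI hϑ))).2]

/-- Growth of the total vorticity: the transport term contributes `G'(π/4)² - G'(0)²`. -/
lemma le_integral_dT_g (h : OneDSol (Ici 0) g P G) (hg : SmoothST g) (hP : SmoothST P)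
    (hPt : ∀ θ ∈ Icc (0:ℝ) (π/4), 0 ≤ P t θ) (ht : 0 ≤ t) :
    dX G t (π/4) ^ 2 - dX G t 0 ^ 2 + cos (π/4) * P t (π/4) - P t 0
      ≤ ∫ θ in (0:ℝ)..(π/4), dT g t θ := by
  have hpi := pi_pos
  have hle : (0:ℝ) ≤ π/4 := by positivity
  have hc : ContinuousOn (fun θ => dT g t θ - 2 * (sin θ * P t θ)) I14 :=
    (hg.smooth_dT.continuousOn_slice ht).sub (continuousOn_const.mul
      (continuous_sin.continuousOn.mul (hP.continuousOn_slice ht)))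
  have hd : ∀ θ ∈ I14, HasDerivWithinAt
      (fun x => -2 * G t x * g t x + dX G t x ^ 2 + 4 * G t x ^ 2 + cos x * P t x)
      (dT g t θ - 2 * (sin θ * P t θ)) I14 θ := by
    intro θ hθ
    have hG := h.hasDeriv_G ht hθ
    refine (((((hG.const_mul (-2)).mul (hg.hasDeriv_X ht hθ)).add
      ((h.hasDeriv_dX_G ht hθ).pow 2)).add ((hG.pow 2).const_mul 4)).add
      (((hasDerivAt_cos θ).hasDerivWithinAt (s := I14)).mul (hP.hasDeriv_X ht hθ))).congr_deriv ?_
    rw [h.dT_g ht hθ]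
    simp
    ring
  have hint := integral_eq_sub_of_hasDerivWithinAt_I14 hd hc
  simp only [h.G_zero ht, h.G_bc₁ t ht, cos_zero] at hint
  have hmono : ∫ θ in (0:ℝ)..(π/4), (dT g t θ - 2 * (sin θ * P t θ))
      ≤ ∫ θ in (0:ℝ)..(π/4), dT g t θ := by
    refine intervalIntegral.integral_mono_on hle
      (ContinuousOn.intervalIntegrable_of_Icc hle (hc.mono Icc_subset_I14))
      (ContinuousOn.intervalIntegrable_of_Icc hle
        ((hg.smooth_dT.continuousOn_slice ht).mono Icc_subset_I14)) fun θ hθ => ?_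
    have := mul_nonneg (sin_nonneg_of_nonneg_of_le_pi hθ.1 (by linarith [hθ.2])) (hPt θ hθ)
    linarith
  linarith

end OneDSol

/-- **Finite-time blow-up for the 1D Boussinesq system (Theorem 4.1).** If
`g₀, P₀ ∈ C^∞([-π/4,π/4])` with `g₀` odd, `g₀, g₀' ≥ 0` on `[0,π/4]`, `P₀` even with
`P₀, P₀', P₀ + P₀'' ≥ 0` on `[0,π/4]`, and `P₀(π/4) > √2 · P₀(0)`, then there is no global
smooth solution of the 1D Boussinesq system with this initial data. -/
theorem oneD_boussinesq_blowup
    (g₀ P₀ : ℝ → ℝ)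
    (hg₀ : ContDiffOn ℝ (⊤ : ℕ∞) g₀ I14)
    (hP₀ : ContDiffOn ℝ (⊤ : ℕ∞) P₀ I14)
    (hg₀odd : ∀ θ ∈ I14, g₀ (-θ) = - g₀ θ)
    (hg₀pos : ∀ θ ∈ Icc (0:ℝ) (π/4), 0 ≤ g₀ θ ∧ 0 ≤ derivWithin g₀ I14 θ)
    (hP₀even : ∀ θ ∈ I14, P₀ (-θ) = P₀ θ)
    (hP₀pos : ∀ θ ∈ Icc (0:ℝ) (π/4),
      0 ≤ P₀ θ ∧ 0 ≤ derivWithin P₀ I14 θ ∧ 0 ≤ P₀ θ + iteratedDerivWithin 2 P₀ I14 θ)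
    (hgap : Real.sqrt 2 * P₀ 0 < P₀ (π/4)) :
    ¬ ∃ g P G : ℝ → ℝ → ℝ,
        ContDiffOn ℝ (⊤ : ℕ∞) (fun q : ℝ × ℝ => g q.1 q.2) (Ici (0:ℝ) ×ˢ I14) ∧
        ContDiffOn ℝ (⊤ : ℕ∞) (fun q : ℝ × ℝ => P q.1 q.2) (Ici (0:ℝ) ×ˢ I14) ∧
        OneDSol (Ici 0) g P G ∧
        (∀ θ ∈ I14, g 0 θ = g₀ θ ∧ P 0 θ = P₀ θ) := by
  rintro ⟨g, P, G, hg, hP, h, hinit⟩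
  change SmoothST g at hg
  change SmoothST P at hP
  have hpi := pi_pos
  have hI := @mem_I14_of_mem
  have m0 : (0:ℝ) ∈ Icc (0:ℝ) (π/4) := ⟨le_rfl, by positivity⟩
  have m1 : π/4 ∈ Icc (0:ℝ) (π/4) := ⟨by positivity, le_rfl⟩
  have hP0 : ∀ θ ∈ Icc (0:ℝ) (π/4), 0 ≤ P 0 θ := fun θ hθ => by
    rw [(hinit θ (hI hθ)).2]
    exact (hP₀pos θ hθ).1
  have hg0' : ∀ θ ∈ Icc (0:ℝ) (π/4), 0 ≤ dX g 0 θ := fun θ hθ => by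
    rw [dX, derivWithin_congr (fun x hx => (hinit x hx).1) (hinit θ (hI hθ)).1]
    exact (hg₀pos θ hθ).2
  have hPP0 : ∀ θ ∈ Icc (0:ℝ) (π/4), 0 ≤ P 0 θ + dX (dX P) 0 θ := fun θ hθ => by
    have h1 : ∀ x ∈ I14, dX P 0 x = iteratedDerivWithin 1 P₀ I14 x := fun x hx => by
      rw [iteratedDerivWithin_one, dX,
        derivWithin_congr (fun y hy => (hinit y hy).2) (hinit x hx).2]
    rw [dX, derivWithin_congr h1 (h1 θ (hI hθ)), ← iteratedDerivWithin_succ,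
      (hinit θ (hI hθ)).2]
    exact (hP₀pos θ hθ).2.2
  have hPnn : ∀ t ≥ 0, ∀ θ ∈ Icc (0:ℝ) (π/4), 0 ≤ P t θ := fun t ht θ hθ =>
    h.P_nonneg hg hP hP0 ht hθ
  have hgmono : ∀ t ≥ 0, MonotoneOn (g t) (Icc (0:ℝ) (π/4)) := fun t ht =>
    monotoneOn_Icc_of_hasDerivWithinAt_I14 (fun x hx => hg.hasDeriv_X ht (hI hx))
      (fun x hx => h.dX_g_nonneg hg hP hP0 hg0' hPP0 ht hx)
  have hgnn : ∀ t ≥ 0, ∀ θ ∈ Icc (0:ℝ) (π/4), 0 ≤ g t θ := fun t ht θ hθ => by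
    have := hgmono t ht m0 hθ hθ.1
    rwa [h.g_zero ht] at this
  have hG' : ∀ t ≥ 0, dX G t 0 ≤ 0 := fun t ht =>
    deriv_zero_nonpos_of_elliptic (fun x hx => h.hasDeriv_G ht hx)
      (fun x hx => h.hasDeriv_dX_G ht hx) (h.G_zero ht) (h.G_bc₁ t ht) (hgnn t ht)
  have hGsum : ∀ t ≥ 0, 0 ≤ dX G t (π/4) + dX G t 0 := fun t ht =>
    deriv_add_nonneg_of_elliptic (fun x hx => h.hasDeriv_G ht hx)
      (fun x hx => h.hasDeriv_dX_G ht hx) (h.G_zero ht) (h.G_bc₁ t ht) (hgmono t ht)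
  have hGint : ∀ t ≥ 0, ∫ θ in (0:ℝ)..(π/4), g t θ ≤ dX G t (π/4) - dX G t 0 := fun t ht =>
    integral_le_of_elliptic (fun x hx => h.hasDeriv_G ht hx)
      (fun x hx => h.hasDeriv_dX_G ht hx) (h.G_zero ht) (h.G_bc₁ t ht) (hgnn t ht)
      (hg.continuousOn_slice ht)
  have hp' : ∀ t ≥ 0, dT P t (π/4) = P t (π/4) * dX G t (π/4) := fun t ht => by
    rw [h.dT_P ht (hI m1), h.G_bc₁ t ht]
    ring
  have hq' : ∀ t ≥ 0, dT P t 0 = P t 0 * dX G t 0 := fun t ht => by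
    rw [h.dT_P ht (hI m0), h.G_zero ht]
    ring
  have hpmono : MonotoneOn (fun t => P t (π/4)) (Ici 0) :=
    monotoneOn_of_hasDerivWithinAt_nonneg (convex_Ici 0)
      (fun t ht => (hP.hasDeriv_T ht (hI m1)).continuousWithinAt)
      (fun t ht => (hP.hasDeriv_T (interior_subset ht) (hI m1)).mono interior_subset)
      (fun t ht => by
        have ht : 0 ≤ t := interior_subset ht
        rw [hp' t ht]
        exact mul_nonneg (hPnn t ht _ m1) (by linarith [hG' t ht, hGsum t ht]))
  have hqanti : AntitoneOn (fun t => P t 0) (Ici 0) :=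
    antitoneOn_of_hasDerivWithinAt_nonpos (convex_Ici 0)
      (fun t ht => (hP.hasDeriv_T ht (hI m0)).continuousWithinAt)
      (fun t ht => (hP.hasDeriv_T (interior_subset ht) (hI m0)).mono interior_subset)
      (fun t ht => by
        have ht : 0 ≤ t := interior_subset ht
        rw [hq' t ht]
        exact mul_nonpos_of_nonneg_of_nonpos (hPnn t ht _ m0) (hG' t ht))
  set p₀ := P 0 (π/4) with hp₀
  set q₀ := P 0 0 with hq₀
  have hgap' : √2 * q₀ < p₀ := by
    rw [hq₀, hp₀, (hinit 0 (hI m0)).2, (hinit _ (hI m1)).2]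
    exact hgap
  have hq₀nn : 0 ≤ q₀ := hP0 0 m0
  have hp₀pos : 0 < p₀ := (mul_nonneg (sqrt_nonneg 2) hq₀nn).trans_lt hgap'
  have hκ : 0 < √2 / 2 - q₀ / p₀ := by
    rw [sub_pos, div_lt_div_iff₀ hp₀pos two_pos]
    have h2 : √2 * √2 = 2 := mul_self_sqrt zero_le_two
    have := mul_lt_mul_of_pos_left hgap' (sqrt_pos.2 (two_pos : (0:ℝ) < 2))
    nlinarith
  refine no_global_of_differential_ineq (p := fun t => P t (π/4))
    (M := fun t => ∫ θ in (0:ℝ)..(π/4), g t θ) hκ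
    (fun t ht => (hP.hasDeriv_T ht.le (hI m1)).hasDerivAt (Ici_mem_nhds ht))
    (fun t ht => hg.hasDerivAt_integral ht)
    (fun t ht => hp₀pos.trans_le (hpmono self_mem_Ici ht.le ht.le))
    (fun t ht => intervalIntegral.integral_nonneg m1.1 (hgnn t ht.le)) ?_ ?_
  · intro t ht
    rw [hp' t ht.le]
    have h1 := hPnn t ht.le _ m1
    have h2 : (∫ θ in (0:ℝ)..(π/4), g t θ) / 2 ≤ dX G t (π/4) := by
      linarith [hGint t ht.le, hGsum t ht.le]
    have := mul_le_mul_of_nonneg_left h2 h1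
    linarith
  · intro t ht
    refine le_trans ?_ (h.le_integral_dT_g hg hP (hPnn t ht.le) ht.le)
    have h1 : p₀ ≤ P t (π/4) := hpmono self_mem_Ici ht.le ht.le
    have h2 : P t 0 ≤ q₀ := hqanti self_mem_Ici ht.le ht.le
    have h3 : q₀ ≤ q₀ / p₀ * P t (π/4) := by
      calc q₀ = q₀ / p₀ * p₀ := by field_simp
        _ ≤ _ := mul_le_mul_of_nonneg_left h1 (by positivity)
    have h4 : 0 ≤ dX G t (π/4) ^ 2 - dX G t 0 ^ 2 := by
      have := mul_nonneg (hGsum t ht.le)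
        (show 0 ≤ dX G t (π/4) - dX G t 0 by linarith [hGsum t ht.le, hG' t ht.le])
      linarith
    rw [cos_pi_div_four]
    linarith
end
end

section
/- Existence for the Dirichlet–Poisson problem on a sector with quadratic growth: Let 0 < β < 1/2 and let f : Ω_β → ℝ be bounded and locally Hölder continuous. Then there exists Ψ : Ω̄_β → ℝ, continuous on Ω̄_β and twice continuously differentiable on Ω_β, such that ΔΨ := ∂_{x₁x₁}Ψ + ∂_{x₂x₂}Ψ = f on Ω_β, Ψ = 0 on ∂Ω_β, and there is a constant C = C(β) > 0 with |Ψ(x)| ≤ C ‖f‖_{L^∞(Ω_β)} |x|² and |∇Ψ(x)| ≤ C ‖f‖_{L^∞(Ω_β)} |x| for all x ∈ Ω_β. -/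
open Set Complex
open scoped ENNReal NNReal Real

noncomputable section

/-- The open sector `Ω_β = { r e^{iθ} : r > 0, 0 < θ < βπ }` in `ℂ ≅ ℝ²`. -/
def Sector (β : ℝ) : Set ℂ := {z | z ≠ 0 ∧ 0 < Complex.arg z ∧ Complex.arg z < β * π}

/-- The Laplacian `ΔΨ = ∂_{x₁x₁}Ψ + ∂_{x₂x₂}Ψ` of a function `Ψ : ℂ → ℝ`. -/
def lap (Ψ : ℂ → ℝ) (z : ℂ) : ℝ :=
  fderiv ℝ (fun w => fderiv ℝ Ψ w 1) z 1 +
    fderiv ℝ (fun w => fderiv ℝ Ψ w Complex.I) z Complex.I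

section
open MeasureTheory Filter Topology

theorem integrableOn_ball_norm_rpow {s : ℝ} (hs : 0 < s) (r : ℝ) (hr : 0 < r) :
    Integrable ((Metric.ball (0 : ℂ) r).indicator fun ω : ℂ => ‖ω‖ ^ (s - 2)) := by
  have h := (integrable_fun_norm_addHaar (E := ℂ) (μ := volume)
    (f := (Iio r).indicator fun x : ℝ => x ^ (s - 2))).2 ?_
  · refine h.congr (Eventually.of_forall fun ω => ?_)
    simp [indicator]
  · have h1 : IntegrableOn (fun x : ℝ => x ^ (s - 1)) (Ioo 0 r) :=
      (intervalIntegral.integrableOn_Ioo_rpow_iff hr).2 (by linarith)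
    have h2 : IntegrableOn ((Iio r).indicator fun x : ℝ => x ^ (s - 1)) (Ioi 0) := by
      rw [integrableOn_indicator_iff measurableSet_Iio]
      rwa [inter_comm, Ioi_inter_Iio]
    refine h2.congr_fun (fun x hx => ?_) measurableSet_Ioi
    have hx : 0 < x := hx
    by_cases hxr : x < r <;> simp [indicator, hxr]
    rw [show s - 1 = 1 + (s - 2) by ring, Real.rpow_add hx, Real.rpow_one]

theorem integrableOn_compl_ball_norm_rpow {s : ℝ} (hs : s < 0) (r : ℝ) (hr : 0 < r) :
    Integrable ((Metric.ball (0 : ℂ) r)ᶜ.indicator fun ω : ℂ => ‖ω‖ ^ (s - 2)) := by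
  have h := (integrable_fun_norm_addHaar (E := ℂ) (μ := volume)
    (f := (Ici r).indicator fun x : ℝ => x ^ (s - 2))).2 ?_
  · refine h.congr (Eventually.of_forall fun ω => ?_)
    simp [indicator]
  · have h1 : IntegrableOn (fun x : ℝ => x ^ (s - 1)) (Ici r) :=
      (integrableOn_Ici_iff_integrableOn_Ioi).2 ((integrableOn_Ioi_rpow_iff hr).2 (by linarith))
    have h2 : IntegrableOn ((Ici r).indicator fun x : ℝ => x ^ (s - 1)) (Ioi 0) := by
      rw [integrableOn_indicator_iff measurableSet_Ici]
      exact h1.mono_set inter_subset_left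
    refine h2.congr_fun (fun x hx => ?_) measurableSet_Ioi
    have hx : 0 < x := hx
    by_cases hxr : r ≤ x <;> simp [indicator, hxr]
    rw [show s - 1 = 1 + (s - 2) by ring, Real.rpow_add hx, Real.rpow_one]

theorem integrable_rieszKernel_one {s : ℝ} (hs : 0 < s) (hs1 : s < 1) :
    Integrable fun ω : ℂ => ‖ω‖ ^ (s - 2) * ‖1 - ω‖⁻¹ := by
  have h1 := (integrableOn_ball_norm_rpow hs (1 / 2) (by norm_num)).const_mul 2
  have h2 := ((integrableOn_ball_norm_rpow (s := 1) one_pos (1 / 2) (by norm_num)).comp_sub_left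
    1).const_mul ((1 / 2 : ℝ) ^ (s - 2))
  have h3 := (integrableOn_compl_ball_norm_rpow (s := s - 1) (by linarith) (1 / 2)
    (by norm_num)).const_mul 3
  refine ((h1.add h2).add h3).mono' ?_ (Eventually.of_forall fun ω => ?_)
  · exact (by fun_prop : Measurable fun ω : ℂ => ‖ω‖ ^ (s - 2) * ‖1 - ω‖⁻¹).aestronglyMeasurable
  have hn1 : ∀ ω : ℂ, ∀ p : ℝ, 0 ≤ ‖ω‖ ^ p := fun ω p => Real.rpow_nonneg (norm_nonneg _) _
  have p1 : 0 ≤ 2 * (Metric.ball (0 : ℂ) (1 / 2)).indicator (fun ω : ℂ => ‖ω‖ ^ (s - 2)) ω :=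
    mul_nonneg (by norm_num) (indicator_nonneg (fun ω _ => hn1 ω _) _)
  have p2 : 0 ≤ (1 / 2 : ℝ) ^ (s - 2) *
      (Metric.ball (0 : ℂ) (1 / 2)).indicator (fun ω : ℂ => ‖ω‖ ^ ((1 : ℝ) - 2)) (1 - ω) :=
    mul_nonneg (by positivity) (indicator_nonneg (fun ω _ => hn1 ω _) _)
  have p3 : 0 ≤ 3 * (Metric.ball (0 : ℂ) (1 / 2))ᶜ.indicator
      (fun ω : ℂ => ‖ω‖ ^ (s - 1 - 2)) ω :=
    mul_nonneg (by norm_num) (indicator_nonneg (fun ω _ => hn1 ω _) _)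
  rw [Real.norm_of_nonneg (mul_nonneg (hn1 _ _) (by positivity))]
  simp only [Pi.add_apply]
  have htri : 1 ≤ ‖ω‖ + ‖1 - ω‖ := by simpa using norm_add_le ω (1 - ω)
  have htri' : ‖ω‖ ≤ 1 + ‖1 - ω‖ := by simpa using norm_sub_le 1 (1 - ω)
  by_cases c1 : ‖ω‖ < 1 / 2
  · have : ‖1 - ω‖⁻¹ ≤ 2 := by
      rw [inv_le_comm₀ (by linarith) (by norm_num)]; linarith
    have e : 2 * (Metric.ball (0 : ℂ) (1 / 2)).indicator (fun ω : ℂ => ‖ω‖ ^ (s - 2)) ω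
        = 2 * ‖ω‖ ^ (s - 2) := by
      rw [indicator_of_mem (by simpa using c1)]
    nlinarith [mul_le_mul_of_nonneg_left this (hn1 ω (s - 2))]
  by_cases c2 : ‖1 - ω‖ < 1 / 2
  · have e : (Metric.ball (0 : ℂ) (1 / 2)).indicator (fun ω : ℂ => ‖ω‖ ^ ((1 : ℝ) - 2)) (1 - ω)
        = ‖1 - ω‖⁻¹ := by
      rw [indicator_of_mem (by simpa using c2), ← Real.rpow_neg_one]; norm_num
    rw [e] at p2 ⊢
    have : ‖ω‖ ^ (s - 2) ≤ (1 / 2 : ℝ) ^ (s - 2) :=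
      Real.rpow_le_rpow_of_nonpos (by norm_num) (by linarith) (by linarith)
    nlinarith [mul_le_mul_of_nonneg_right this (inv_nonneg.2 (norm_nonneg (1 - ω)))]
  · have e : (Metric.ball (0 : ℂ) (1 / 2))ᶜ.indicator
      (fun ω : ℂ => ‖ω‖ ^ (s - 1 - 2)) ω = ‖ω‖ ^ (s - 2) * ‖ω‖⁻¹ := by
      rw [indicator_of_mem (by simpa using c1), ← Real.rpow_neg_one,
        ← Real.rpow_add (by linarith)]
      ring_nf
    rw [e] at p3 ⊢
    have : ‖1 - ω‖⁻¹ ≤ 3 * ‖ω‖⁻¹ := by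
      rw [← div_eq_mul_inv, inv_le_comm₀ (by linarith) (div_pos (by norm_num) (by linarith)),
        inv_div]
      linarith
    nlinarith [mul_le_mul_of_nonneg_left this (hn1 ω (s - 2))]

/-- The convergent integral `∫ |ω|^(s-2) / |1 - ω|` for `0 < s < 1`. -/
def rieszConst (s : ℝ) : ℝ := ∫ ω : ℂ, ‖ω‖ ^ (s - 2) * ‖1 - ω‖⁻¹

theorem rieszConst_nonneg (s : ℝ) : 0 ≤ rieszConst s :=
  integral_nonneg fun _ => by positivity

theorem rieszKernel_scaling {s : ℝ} {w : ℂ} (hw : w ≠ 0) (ω : ℂ) :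
    ‖w * ω‖ ^ (s - 2) * ‖w - w * ω‖⁻¹ = ‖w‖ ^ (s - 3) * (‖ω‖ ^ (s - 2) * ‖1 - ω‖⁻¹) := by
  have h0 : 0 < ‖w‖ := norm_pos_iff.2 hw
  have : w - w * ω = w * (1 - ω) := by ring
  rw [this, norm_mul, norm_mul, Real.mul_rpow (norm_nonneg _) (norm_nonneg _), mul_inv,
    show s - 3 = (s - 2) + (-1) by ring, Real.rpow_add h0, Real.rpow_neg_one]
  ring

/-- The rotation of the plane that maps `1` to `w / |w|`. -/
def rotationTo (w : ℂ) : ℂ ≃ₗᵢ[ℝ] ℂ := rotation (Circle.exp w.arg)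

theorem smul_rotationTo (w ω : ℂ) : ‖w‖ • rotationTo w ω = w * ω := by
  rw [rotationTo, rotation_apply, Complex.real_smul, ← mul_assoc, Circle.coe_exp,
    norm_mul_exp_arg_mul_I]

theorem integrable_rieszKernel {s : ℝ} (hs : 0 < s) (hs1 : s < 1) {w : ℂ} (hw : w ≠ 0) :
    Integrable fun ω : ℂ => ‖ω‖ ^ (s - 2) * ‖w - ω‖⁻¹ := by
  have h0 : ‖w‖ ≠ 0 := norm_ne_zero_iff.2 hw
  rw [← integrable_comp_smul_iff volume _ h0,
    ← (rotationTo w).measurePreserving.integrable_comp_emb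
      (rotationTo w).toHomeomorph.measurableEmbedding]
  refine ((integrable_rieszKernel_one hs hs1).const_mul (‖w‖ ^ (s - 3))).congr
    (Eventually.of_forall fun ω => ?_)
  simp only [Function.comp, smul_rotationTo, rieszKernel_scaling hw]

theorem integral_rieszKernel {s : ℝ} {w : ℂ} (hw : w ≠ 0) :
    ∫ ω : ℂ, ‖ω‖ ^ (s - 2) * ‖w - ω‖⁻¹ = rieszConst s * ‖w‖ ^ (s - 1) := by
  have h0 : 0 < ‖w‖ := norm_pos_iff.2 hw
  have h1 := Measure.integral_comp_smul (volume : Measure ℂ)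
    (fun ω : ℂ => ‖ω‖ ^ (s - 2) * ‖w - ω‖⁻¹) ‖w‖
  have h2 := (rotationTo w).measurePreserving.integral_comp
    (rotationTo w).toHomeomorph.measurableEmbedding
    (fun ω : ℂ => ‖‖w‖ • ω‖ ^ (s - 2) * ‖w - ‖w‖ • ω‖⁻¹)
  simp only [smul_rotationTo, rieszKernel_scaling hw, integral_const_mul] at h2
  rw [← h2] at h1
  rw [Complex.finrank_real_complex, smul_eq_mul, abs_of_nonneg (by positivity)] at h1
  rw [rieszConst, show s - 1 = (s - 3) + (2 : ℕ) by push_cast; ring, Real.rpow_add h0,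
    Real.rpow_natCast]
  field_simp at h1 ⊢
  linarith

theorem integrable_rieszKernel_shift {s : ℝ} (hs : 0 < s) (hs1 : s < 1) (w : ℂ) {t : ℂ}
    (ht : t ≠ 0) : Integrable fun ω : ℂ => ‖w - ω‖ ^ (s - 2) * ‖w + t - ω‖⁻¹ := by
  refine ((integrable_rieszKernel hs hs1 (neg_ne_zero.2 ht)).comp_sub_left w).congr
    (Eventually.of_forall fun ω => ?_)
  simp only
  rw [← norm_neg (-t - (w - ω))]
  ring_nf

theorem integral_rieszKernel_shift {s : ℝ} (w : ℂ) {t : ℂ} (ht : t ≠ 0) :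
    ∫ ω : ℂ, ‖w - ω‖ ^ (s - 2) * ‖w + t - ω‖⁻¹ = rieszConst s * ‖t‖ ^ (s - 1) := by
  rw [← norm_neg t, ← integral_rieszKernel (neg_ne_zero.2 ht),
    ← integral_sub_left_eq_self _ _ w]
  congr 1 with ω
  rw [← norm_neg (-t - ω)]
  ring_nf

/-- A differentiability criterion: the first-order Taylor remainder of `f` at `w` is the integral
of a function dominated by `‖t‖ ^ 2` times a combination of two Riesz kernels. -/
theorem hasFDerivAt_of_integral_error {E : Type*} [NormedAddCommGroup E] [NormedSpace ℝ E]
    {f : ℂ → E} {L : ℂ →L[ℝ] E} {w : ℂ} (hw : w ≠ 0) {a s P Q δ : ℝ} (ha : 0 < a) (ha1 : a < 1)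
    (hs : 0 < s) (hs1 : s < 1) (hδ : 0 < δ) (hQ : 0 ≤ Q)
    (h : ∀ t : ℂ, t ≠ 0 → ‖t‖ < δ → ∃ e : ℂ → E, f (w + t) - f w - L t = ∫ ω, e ω ∧
      ∀ᵐ ω, ‖e ω‖ ≤ ‖t‖ ^ 2 *
        ((P * ‖w - ω‖ ^ (a - 2) + Q * ‖ω‖ ^ (s - 2)) * ‖w + t - ω‖⁻¹)) :
    HasFDerivAt f L w := by
  have h0 : 0 < ‖w‖ := norm_pos_iff.2 hw
  rw [hasFDerivAt_iff_isLittleO_nhds_zero]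
  refine Asymptotics.IsLittleO.of_bound fun c hc => ?_
  have hlim : Tendsto (fun t : ℂ => P * rieszConst a * ‖t‖ ^ a +
      Q * (rieszConst s * (‖w‖ / 2) ^ (s - 1)) * ‖t‖) (𝓝 0) (𝓝 0) := by
    have h1 : Continuous fun t : ℂ => P * rieszConst a * ‖t‖ ^ a +
      Q * (rieszConst s * (‖w‖ / 2) ^ (s - 1)) * ‖t‖ := by
      have := (continuous_norm (E := ℂ)).rpow_const (p := a) fun _ => Or.inr ha.le
      fun_prop
    simpa [Real.zero_rpow ha.ne'] using h1.tendsto 0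
  filter_upwards [hlim.eventually_lt_const hc, Metric.ball_mem_nhds (0 : ℂ) hδ,
    Metric.ball_mem_nhds (0 : ℂ) (half_pos h0)] with t h1 h2 h3
  rw [mem_ball_zero_iff] at h2 h3
  by_cases ht : t = 0
  · simp [ht]
  have ht0 : 0 < ‖t‖ := norm_pos_iff.2 ht
  obtain ⟨e, he, hb⟩ := h t ht h2
  have hwt' : ‖w‖ / 2 ≤ ‖w + t‖ := by
    have := norm_sub_le (w + t) t
    rw [add_sub_cancel_right] at this
    linarith
  have hwt : w + t ≠ 0 := norm_pos_iff.1 (by linarith)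
  have i1 := (integrable_rieszKernel_shift ha ha1 w ht).const_mul P
  have i2 := (integrable_rieszKernel hs hs1 hwt).const_mul Q
  have e1 : (fun ω => ‖t‖ ^ 2 *
        ((P * ‖w - ω‖ ^ (a - 2) + Q * ‖ω‖ ^ (s - 2)) * ‖w + t - ω‖⁻¹)) = fun ω =>
      ‖t‖ ^ 2 * (P * (‖w - ω‖ ^ (a - 2) * ‖w + t - ω‖⁻¹) +
        Q * (‖ω‖ ^ (s - 2) * ‖w + t - ω‖⁻¹)) := by
    ext ω; ring
  have hle := norm_integral_le_of_norm_le (g := fun ω => ‖t‖ ^ 2 *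
        ((P * ‖w - ω‖ ^ (a - 2) + Q * ‖ω‖ ^ (s - 2)) * ‖w + t - ω‖⁻¹))
    (by rw [e1]; exact (i1.add i2).const_mul _) hb
  rw [he]
  refine hle.trans ?_
  rw [e1, integral_const_mul, integral_add i1 i2, integral_const_mul, integral_const_mul,
    integral_rieszKernel_shift w ht, integral_rieszKernel hwt]
  have e2 : ‖t‖ * ‖t‖ ^ (a - 1) = ‖t‖ ^ a := by
    rw [show a = 1 + (a - 1) by ring, Real.rpow_add ht0, Real.rpow_one]; ring_nf
  have e3 : ‖w + t‖ ^ (s - 1) ≤ (‖w‖ / 2) ^ (s - 1) :=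
    Real.rpow_le_rpow_of_nonpos (by linarith) hwt' (by linarith)
  have e4 : Q * (rieszConst s * ‖w + t‖ ^ (s - 1)) ≤
      Q * (rieszConst s * (‖w‖ / 2) ^ (s - 1)) :=
    mul_le_mul_of_nonneg_left (mul_le_mul_of_nonneg_left e3 (rieszConst_nonneg s)) hQ
  calc _ = ‖t‖ * (P * rieszConst a * (‖t‖ * ‖t‖ ^ (a - 1)) +
          Q * (rieszConst s * ‖w + t‖ ^ (s - 1)) * ‖t‖) := by ring
    _ ≤ ‖t‖ * (P * rieszConst a * ‖t‖ ^ a +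
          Q * (rieszConst s * (‖w‖ / 2) ^ (s - 1)) * ‖t‖) := by
        rw [e2]; gcongr
    _ ≤ c * ‖t‖ := by nlinarith

theorem abs_log_sub_log_le {a b : ℝ} (ha : 0 < a) (hb : 0 < b) :
    |Real.log a - Real.log b| ≤ |a - b| * (a⁻¹ + b⁻¹) := by
  wlog hab : b ≤ a generalizing a b
  · rw [abs_sub_comm, abs_sub_comm a b, add_comm]
    exact this hb ha (le_of_not_ge hab)
  have h1 : Real.log a - Real.log b ≤ (a - b) * b⁻¹ := by
    rw [← Real.log_div ha.ne' hb.ne']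
    refine (Real.log_le_sub_one_of_pos (by positivity)).trans_eq ?_
    field_simp
  rw [abs_of_nonneg (sub_nonneg.2 (Real.log_le_log hb hab)), abs_of_nonneg (sub_nonneg.2 hab)]
  nlinarith [mul_nonneg (sub_nonneg.2 hab) (inv_nonneg.2 ha.le)]

theorem abs_log_norm_one_add_sub_re_le {x : ℂ} (hx : 1 + x ≠ 0) :
    |Real.log ‖1 + x‖ - x.re| ≤ 4 * (‖x‖ ^ 2 / ‖1 + x‖) := by
  have hy : 0 < ‖1 + x‖ := norm_pos_iff.2 hx
  have hre : x.re = (‖1 + x‖ ^ 2 - 1 - ‖x‖ ^ 2) / 2 := by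
    rw [Complex.sq_norm, Complex.sq_norm, normSq_apply, normSq_apply]; simp; ring
  have hq := norm_nonneg x
  have t1 : ‖1 + x‖ ≤ 1 + ‖x‖ := by simpa using norm_add_le 1 x
  have t2 : 1 ≤ ‖1 + x‖ + ‖x‖ := by simpa using norm_sub_le (1 + x) x
  have t3 : ‖x‖ ≤ ‖1 + x‖ + 1 := by simpa using norm_sub_le (1 + x) 1
  have up := Real.log_le_sub_one_of_pos hy
  have lo := Real.one_sub_inv_le_log_of_pos hy
  rw [hre]
  set y := ‖1 + x‖
  set q := ‖x‖
  rw [← mul_div_assoc, le_div_iff₀ hy, ← abs_of_pos hy, ← abs_mul, abs_of_pos hy, abs_le]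
  have lo' : y - 1 ≤ y * Real.log y := by
    have := mul_le_mul_of_nonneg_left lo hy.le
    rwa [mul_sub, mul_one, mul_inv_cancel₀ hy.ne'] at this
  have up' : y * Real.log y ≤ y * (y - 1) := mul_le_mul_of_nonneg_left up hy.le
  constructor
  · nlinarith [mul_nonneg (sub_nonneg.2 t1) (add_nonneg hy.le hq),
      mul_nonneg (by linarith : 0 ≤ q - (y - 1)) (by linarith : 0 ≤ q + (y - 1)),
      mul_nonneg hy.le (mul_nonneg (by linarith : 0 ≤ q - (y - 1))
        (by linarith : 0 ≤ q + (y - 1))), sq_nonneg q]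
  · by_cases h2 : y ≤ 2
    · nlinarith [mul_nonneg hy.le (sq_nonneg (y - 1)), mul_nonneg (sub_nonneg.2 h2) (sq_nonneg q)]
    · push Not at h2
      have a1 : q ^ 2 - (y - 1) ^ 2 ≤ 4 * q := by nlinarith
      have a2 : y * (q ^ 2 - (y - 1) ^ 2) ≤ y * (4 * q) := mul_le_mul_of_nonneg_left a1 hy.le
      nlinarith [mul_nonneg hq (by linarith : 0 ≤ 2 * q - y)]

/-- The logarithmic potential of `g`, normalised to vanish at `1`. -/
def logPotential (g : ℂ → ℝ) (w : ℂ) : ℝ :=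
  ∫ ω : ℂ, (Real.log ‖w - ω‖ - Real.log ‖1 - ω‖) * g ω

/-- The Cauchy transform of `g`. -/
def cauchyPotential (g : ℂ → ℝ) (w : ℂ) : ℂ := ∫ ω : ℂ, (g ω : ℂ) / (w - ω)

section
variable {g : ℂ → ℝ} {A s : ℝ}

theorem norm_cauchyKernel_le (hA : ∀ ω, |g ω| ≤ A * ‖ω‖ ^ (s - 2)) (w ω : ℂ) :
    ‖(g ω : ℂ) / (w - ω)‖ ≤ A * (‖ω‖ ^ (s - 2) * ‖w - ω‖⁻¹) := by
  rw [norm_div, Complex.norm_real, Real.norm_eq_abs, div_eq_mul_inv, ← mul_assoc]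
  exact mul_le_mul_of_nonneg_right (hA ω) (by positivity)

theorem integrable_cauchyKernel (hs : 0 < s) (hs1 : s < 1) (hg : AEStronglyMeasurable g)
    (hA : ∀ ω, |g ω| ≤ A * ‖ω‖ ^ (s - 2)) {w : ℂ} (hw : w ≠ 0) :
    Integrable fun ω : ℂ => (g ω : ℂ) / (w - ω) := by
  refine ((integrable_rieszKernel hs hs1 hw).const_mul A).mono' ?_
    (Eventually.of_forall (norm_cauchyKernel_le hA w))
  have h1 : AEStronglyMeasurable (fun ω => (g ω : ℂ)) :=
    continuous_ofReal.comp_aestronglyMeasurable hg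
  have h2 : Measurable fun ω : ℂ => (w - ω)⁻¹ := by fun_prop
  exact h1.mul h2.aestronglyMeasurable

theorem norm_cauchyPotential_le (hs : 0 < s) (hs1 : s < 1)
    (hA : ∀ ω, |g ω| ≤ A * ‖ω‖ ^ (s - 2)) {w : ℂ} (hw : w ≠ 0) :
    ‖cauchyPotential g w‖ ≤ A * (rieszConst s * ‖w‖ ^ (s - 1)) := by
  rw [← integral_rieszKernel hw, ← integral_const_mul]
  exact norm_integral_le_of_norm_le ((integrable_rieszKernel hs hs1 hw).const_mul A)
    (Eventually.of_forall (norm_cauchyKernel_le hA w))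

theorem ae_ne_point (w : ℂ) : ∀ᵐ ω : ℂ, ω ≠ w := by
  simp [ae_iff, measure_singleton]

theorem ae_abs_log_sub_log_mul_le (hA : ∀ ω, |g ω| ≤ A * ‖ω‖ ^ (s - 2)) (w w' : ℂ) :
    ∀ᵐ ω : ℂ, ‖(Real.log ‖w - ω‖ - Real.log ‖w' - ω‖) * g ω‖ ≤
      A * ‖w - w'‖ * (‖ω‖ ^ (s - 2) * ‖w - ω‖⁻¹ + ‖ω‖ ^ (s - 2) * ‖w' - ω‖⁻¹) := by
  filter_upwards [ae_ne_point w, ae_ne_point w'] with ω h1 h2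
  have p1 : 0 < ‖w - ω‖ := norm_pos_iff.2 (sub_ne_zero.2 h1.symm)
  have p2 : 0 < ‖w' - ω‖ := norm_pos_iff.2 (sub_ne_zero.2 h2.symm)
  have h3 : |‖w - ω‖ - ‖w' - ω‖| ≤ ‖w - w'‖ := by
    simpa using abs_norm_sub_norm_le (w - ω) (w' - ω)
  rw [norm_mul, Real.norm_eq_abs, Real.norm_eq_abs]
  calc _ ≤ (‖w - w'‖ * (‖w - ω‖⁻¹ + ‖w' - ω‖⁻¹)) * (A * ‖ω‖ ^ (s - 2)) := by
        refine mul_le_mul ((abs_log_sub_log_le p1 p2).trans ?_) (hA ω) (abs_nonneg _)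
          (by positivity)
        exact mul_le_mul_of_nonneg_right h3 (by positivity)
    _ = _ := by ring

theorem integrable_log_sub_log_mul (hs : 0 < s) (hs1 : s < 1) (hg : AEStronglyMeasurable g)
    (hA : ∀ ω, |g ω| ≤ A * ‖ω‖ ^ (s - 2)) {w w' : ℂ} (hw : w ≠ 0) (hw' : w' ≠ 0) :
    Integrable fun ω : ℂ => (Real.log ‖w - ω‖ - Real.log ‖w' - ω‖) * g ω := by
  refine Integrable.mono' (((integrable_rieszKernel hs hs1 hw).add
    (integrable_rieszKernel hs hs1 hw')).const_mul (A * ‖w - w'‖)) ?_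
    (ae_abs_log_sub_log_mul_le hA w w')
  have h2 : Measurable fun ω : ℂ => Real.log ‖w - ω‖ - Real.log ‖w' - ω‖ := by fun_prop
  exact h2.aestronglyMeasurable.mul hg

theorem logPotential_sub (hs : 0 < s) (hs1 : s < 1) (hg : AEStronglyMeasurable g)
    (hA : ∀ ω, |g ω| ≤ A * ‖ω‖ ^ (s - 2)) {w w' : ℂ} (hw : w ≠ 0) (hw' : w' ≠ 0) :
    logPotential g w - logPotential g w' =
      ∫ ω : ℂ, (Real.log ‖w - ω‖ - Real.log ‖w' - ω‖) * g ω := by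
  rw [logPotential, logPotential, ← integral_sub
    (integrable_log_sub_log_mul hs hs1 hg hA hw one_ne_zero)
    (integrable_log_sub_log_mul hs hs1 hg hA hw' one_ne_zero)]
  congr 1 with ω
  ring

theorem abs_logPotential_sub_le (hs : 0 < s) (hs1 : s < 1) (hg : AEStronglyMeasurable g)
    (hA : ∀ ω, |g ω| ≤ A * ‖ω‖ ^ (s - 2)) {w w' : ℂ} (hw : w ≠ 0) (hw' : w' ≠ 0) :
    |logPotential g w - logPotential g w'| ≤
      A * ‖w - w'‖ * (rieszConst s * ‖w‖ ^ (s - 1) + rieszConst s * ‖w'‖ ^ (s - 1)) := by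
  rw [logPotential_sub hs hs1 hg hA hw hw', ← integral_rieszKernel hw, ← integral_rieszKernel hw',
    ← integral_add (integrable_rieszKernel hs hs1 hw) (integrable_rieszKernel hs hs1 hw'),
    ← integral_const_mul]
  exact norm_integral_le_of_norm_le (((integrable_rieszKernel hs hs1 hw).add
    (integrable_rieszKernel hs hs1 hw')).const_mul (A * ‖w - w'‖))
    (ae_abs_log_sub_log_mul_le hA w w')

theorem rieszKernel_le_add (hs1 : s < 1) {w ω : ℂ} (hw : w ≠ 0) (hω : ω ≠ w) :
    ‖ω‖ ^ (s - 2) * ‖w - ω‖⁻¹ ≤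
      2 / ‖w‖ * ‖w - ω‖ ^ (s - 2) + 2 / ‖w‖ * ‖ω‖ ^ (s - 2) := by
  have h0 : 0 < ‖w‖ := norm_pos_iff.2 hw
  have h1 : 0 < ‖w - ω‖ := norm_pos_iff.2 (sub_ne_zero.2 hω.symm)
  have htri : ‖w‖ ≤ ‖w - ω‖ + ‖ω‖ := by simpa using norm_add_le (w - ω) ω
  have n1 : 0 ≤ ‖w - ω‖ ^ (s - 2) := by positivity
  have n2 : 0 ≤ ‖ω‖ ^ (s - 2) := by positivity
  by_cases c : ‖w‖ / 2 ≤ ‖w - ω‖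
  · have : ‖w - ω‖⁻¹ ≤ 2 / ‖w‖ := by
      rw [← inv_div]; exact inv_anti₀ (by positivity) c
    have h3 : 0 ≤ 2 / ‖w‖ * ‖w - ω‖ ^ (s - 2) := by positivity
    nlinarith [mul_le_mul_of_nonneg_left this n2]
  · push Not at c
    have hω0 : 0 < ‖ω‖ := by linarith
    have h2 : ‖ω‖⁻¹ ≤ 2 / ‖w‖ := by
      rw [← inv_div]; exact inv_anti₀ (by positivity) (by linarith)
    have h3 : ‖ω‖ ^ (s - 1) ≤ ‖w - ω‖ ^ (s - 1) :=
      Real.rpow_le_rpow_of_nonpos h1 (by linarith) (by linarith)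
    have e1 : ‖ω‖ ^ (s - 2) = ‖ω‖ ^ (s - 1) * ‖ω‖⁻¹ := by
      rw [← Real.rpow_neg_one, ← Real.rpow_add hω0]; ring_nf
    have e2 : ‖w - ω‖ ^ (s - 2) = ‖w - ω‖ ^ (s - 1) * ‖w - ω‖⁻¹ := by
      rw [← Real.rpow_neg_one, ← Real.rpow_add h1]; ring_nf
    have h4 : 0 ≤ 2 / ‖w‖ * ‖ω‖ ^ (s - 2) := by positivity
    calc ‖ω‖ ^ (s - 2) * ‖w - ω‖⁻¹ ≤ (‖w - ω‖ ^ (s - 1) * (2 / ‖w‖)) * ‖w - ω‖⁻¹ := by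
          rw [e1]; gcongr
      _ = 2 / ‖w‖ * ‖w - ω‖ ^ (s - 2) := by rw [e2]; ring
      _ ≤ _ := by linarith

theorem hasFDerivAt_logPotential (hs : 0 < s) (hs1 : s < 1) (hg : AEStronglyMeasurable g)
    (hA0 : 0 ≤ A) (hA : ∀ ω, |g ω| ≤ A * ‖ω‖ ^ (s - 2)) {w : ℂ} (hw : w ≠ 0) :
    HasFDerivAt (logPotential g)
      (reCLM ∘L ContinuousLinearMap.mul ℝ ℂ (cauchyPotential g w)) w := by
  have h0 : 0 < ‖w‖ := norm_pos_iff.2 hw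
  refine hasFDerivAt_of_integral_error (P := 4 * A * (2 / ‖w‖)) (Q := 4 * A * (2 / ‖w‖))
    hw hs hs1 hs hs1 h0 (by positivity) fun t ht htw => ?_
  have hwt : w + t ≠ 0 := fun h => by
    rw [eq_neg_of_add_eq_zero_left h, norm_neg] at htw
    exact lt_irrefl _ htw
  refine ⟨fun ω => (Real.log ‖w + t - ω‖ - Real.log ‖w - ω‖) * g ω -
    ((g ω : ℂ) / (w - ω) * t).re, ?_, ?_⟩
  · have i1 := (integrable_cauchyKernel hs hs1 hg hA hw).mul_const t
    have h1 : ∫ ω, ((g ω : ℂ) / (w - ω) * t).re = (cauchyPotential g w * t).re := by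
      rw [cauchyPotential, ← integral_mul_const]
      exact integral_re i1
    have h2 := integral_sub (integrable_log_sub_log_mul hs hs1 hg hA hwt hw) i1.re
    simp only [RCLike.re_to_complex] at h2
    rw [h2, h1, logPotential_sub hs hs1 hg hA hwt hw]
    simp
  · filter_upwards [ae_ne_point w, ae_ne_point (w + t)] with ω h1 h2
    have p1 : w - ω ≠ 0 := sub_ne_zero.2 h1.symm
    have p2 : w + t - ω ≠ 0 := sub_ne_zero.2 h2.symm
    have n1 : 0 < ‖w - ω‖ := norm_pos_iff.2 p1
    have n2 : 0 < ‖w + t - ω‖ := norm_pos_iff.2 p2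
    have e1 : 1 + t / (w - ω) = (w + t - ω) / (w - ω) := by field_simp; ring
    have e2 : (g ω : ℂ) / (w - ω) * t = (g ω : ℂ) * (t / (w - ω)) := by ring
    have key := abs_log_norm_one_add_sub_re_le (x := t / (w - ω))
      (by rw [e1]; exact div_ne_zero p2 p1)
    rw [e1, norm_div, norm_div, Real.log_div n2.ne' n1.ne'] at key
    rw [e2, re_ofReal_mul, mul_comm (g ω), ← sub_mul, norm_mul, Real.norm_eq_abs,
      Real.norm_eq_abs]
    calc _ ≤ (4 * ((‖t‖ / ‖w - ω‖) ^ 2 / (‖w + t - ω‖ / ‖w - ω‖))) * (A * ‖ω‖ ^ (s - 2)) :=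
          mul_le_mul key (hA ω) (abs_nonneg _) (by positivity)
      _ = 4 * A * ‖t‖ ^ 2 * ‖w + t - ω‖⁻¹ * (‖ω‖ ^ (s - 2) * ‖w - ω‖⁻¹) := by
          field_simp
      _ ≤ 4 * A * ‖t‖ ^ 2 * ‖w + t - ω‖⁻¹ *
          (2 / ‖w‖ * ‖w - ω‖ ^ (s - 2) + 2 / ‖w‖ * ‖ω‖ ^ (s - 2)) := by
          gcongr
          exact rieszKernel_le_add hs1 hw h1
      _ = _ := by ring

end

theorem circleAverage_inv_sub_of_lt {t : ℂ} {r : ℝ} (hr : 0 ≤ r) (h : r < ‖t‖) :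
    Real.circleAverage (fun z => (t - z)⁻¹) 0 r = t⁻¹ := by
  have hne : ∀ z ∈ Metric.closedBall (0 : ℂ) |r|, t - z ≠ 0 := fun z hz h0 => by
    rw [abs_of_nonneg hr, mem_closedBall_zero_iff, ← sub_eq_zero.1 h0] at hz
    linarith
  have hd : DifferentiableOn ℂ (fun z => (t - z)⁻¹) (Metric.closedBall (0 : ℂ) |r|) :=
    (differentiableOn_id.const_sub t).inv hne
  have := (hd.mono (closure_minimal Metric.ball_subset_closedBall
    Metric.isClosed_closedBall)).diffContOnCl.circleAverage
  simpa using this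

theorem circleAverage_inv_sub_of_gt {t : ℂ} {r : ℝ} (ht : t ≠ 0) (h : ‖t‖ < r) :
    Real.circleAverage (fun z => (t - z)⁻¹) 0 r = 0 := by
  have hr : 0 < r := (norm_nonneg t).trans_lt h
  have hne : ∀ z ∈ Metric.sphere (0 : ℂ) |r|, z - t ≠ 0 := fun z hz h0 => by
    rw [abs_of_pos hr, mem_sphere_zero_iff_norm, sub_eq_zero.1 h0] at hz
    linarith
  have h1 := (diffContOnCl_const (𝕜 := ℂ) (c := (1 : ℂ)) (s := Metric.ball (0 : ℂ) |r|)
    ).circleAverage_smul_div (w := t) (by rwa [abs_of_pos hr, mem_ball_zero_iff])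
  have hc : ContinuousOn (fun z : ℂ => (z - 0) / (z - t)) (Metric.sphere (0 : ℂ) |r|) :=
    (by fun_prop : ContinuousOn (fun z : ℂ => z - 0) _).div (by fun_prop) hne
  have h2 : EqOn (fun z : ℂ => (t - z)⁻¹)
      (fun z => t⁻¹ • ((1 : ℂ) - ((z - 0) / (z - t)) • (1 : ℂ))) (Metric.sphere 0 |r|) := by
    intro z hz
    have h3 := hne z hz
    have h4 : t - z ≠ 0 := by rw [← neg_sub]; exact neg_ne_zero.2 h3
    simp only [smul_eq_mul]
    field_simp
    ring
  rw [Real.circleAverage_congr_sphere h2, Real.circleAverage_fun_smul,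
    Real.circleAverage_fun_sub (circleIntegrable_const _ _ _)
      (by simpa using hc.circleIntegrable'), h1, Real.circleAverage_const]
  simp

theorem integral_rotate_inv_sub (t ω : ℂ) :
    ∫ θ in (0)..2 * π, (t - Circle.exp θ * ω)⁻¹ =
      (2 * π) • Real.circleAverage (fun z => (t - z)⁻¹) 0 ‖ω‖ := by
  rw [Real.circleAverage_eq_integral_add ω.arg, smul_smul, mul_inv_cancel₀ (by positivity),
    one_smul]
  congr 1 with θ
  congr 2
  conv_lhs => rw [← norm_mul_exp_arg_mul_I ω]
  rw [circleMap_zero, Circle.coe_exp]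
  push_cast
  rw [add_mul, Complex.exp_add]
  ring

theorem integrable_indicator_ball_inv_sub (c w : ℂ) (R : ℝ) :
    Integrable ((Metric.ball c R).indicator fun ω : ℂ => (w - ω)⁻¹) := by
  have hR : 0 < |R| + ‖w - c‖ + 1 := by positivity
  have h := (integrableOn_ball_norm_rpow (s := 1) one_pos _ hR).comp_sub_left w
  refine h.mono' ?_ (Eventually.of_forall fun ω => ?_)
  · exact ((by fun_prop : Measurable fun ω : ℂ => (w - ω)⁻¹).indicator
      measurableSet_ball).aestronglyMeasurable
  rw [norm_indicator_eq_indicator_norm]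
  by_cases hω : ω ∈ Metric.ball c R
  · have : w - ω ∈ Metric.ball (0 : ℂ) (|R| + ‖w - c‖ + 1) := by
      rw [mem_ball_zero_iff]
      rw [mem_ball_iff_norm'] at hω
      have := norm_add_le (w - c) (c - ω)
      rw [sub_add_sub_cancel] at this
      linarith [le_abs_self R]
    rw [indicator_of_mem hω, indicator_of_mem this, norm_inv, ← Real.rpow_neg_one]
    norm_num
  · rw [indicator_of_notMem hω]
    exact indicator_nonneg (fun _ _ => by positivity) _

theorem integral_ball_zero_inv_sub {t : ℂ} {R : ℝ} (ht : ‖t‖ < R) :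
    ∫ ω, (Metric.ball (0 : ℂ) R).indicator (fun ω => (t - ω)⁻¹) ω = π * (starRingEnd ℂ) t := by
  set B := Metric.ball (0 : ℂ) R
  by_cases ht0 : t = 0
  · subst ht0
    have h := integral_neg_eq_self (B.indicator fun ω : ℂ => ((0 : ℂ) - ω)⁻¹) volume
    have h2 : ∀ ω : ℂ, B.indicator (fun ω : ℂ => ((0 : ℂ) - ω)⁻¹) (-ω) =
        -B.indicator (fun ω : ℂ => ((0 : ℂ) - ω)⁻¹) ω := fun ω => by
      by_cases hω : ω ∈ B
      · rw [indicator_of_mem hω, indicator_of_mem (by simpa [B] using hω)]; simp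
      · rw [indicator_of_notMem hω, indicator_of_notMem (by simpa [B] using hω)]; simp
    simp only [h2, integral_neg] at h
    simpa using self_eq_neg.1 h.symm
  have hint := integrable_indicator_ball_inv_sub 0 t R
  have hmeas : Measurable (B.indicator fun ω : ℂ => (t - ω)⁻¹) :=
    (by fun_prop : Measurable fun ω : ℂ => (t - ω)⁻¹).indicator measurableSet_ball
  set h := B.indicator fun ω : ℂ => (t - ω)⁻¹ with hdef
  let f : ℝ → ℂ → ℂ := fun θ ω => h (rotation (Circle.exp θ) ω)
  have hrot : ∀ θ, Integrable (f θ) := fun θ =>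
    ((rotation (Circle.exp θ)).measurePreserving.integrable_comp_emb
      (rotation (Circle.exp θ)).toHomeomorph.measurableEmbedding).2 hint
  have hrotI : ∀ θ, ∫ ω, f θ ω = ∫ ω, h ω := fun θ =>
    (rotation (Circle.exp θ)).measurePreserving.integral_comp
      (rotation (Circle.exp θ)).toHomeomorph.measurableEmbedding h
  have hrotN : ∀ θ, ∫ ω, ‖f θ ω‖ = ∫ ω, ‖h ω‖ := fun θ =>
    (rotation (Circle.exp θ)).measurePreserving.integral_comp
      (rotation (Circle.exp θ)).toHomeomorph.measurableEmbedding fun ω => ‖h ω‖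
  have hfm : Measurable (Function.uncurry f) := by
    have : Continuous fun p : ℝ × ℂ => rotation (Circle.exp p.1) p.2 := by
      simp only [rotation_apply]
      fun_prop
    exact hmeas.comp this.measurable
  have hprod : Integrable (Function.uncurry f) ((volume.restrict (Ioc 0 (2 * π))).prod volume) := by
    rw [integrable_prod_iff hfm.aestronglyMeasurable]
    refine ⟨Eventually.of_forall hrot, ?_⟩
    simp only [Function.uncurry_apply_pair, hrotN]
    exact integrable_const _
  have hswap := integral_integral_swap hprod
  simp only [hrotI, integral_const] at hswap
  have hin : ∀ᵐ ω : ℂ, ∫ θ in Ioc 0 (2 * π), f θ ω =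
      (Metric.ball (0 : ℂ) ‖t‖).indicator (fun _ => (2 * π) • t⁻¹) ω := by
    have hs : ∀ᵐ ω : ℂ, ω ∉ Metric.sphere (0 : ℂ) ‖t‖ :=
      compl_mem_ae_iff.2 (Measure.addHaar_sphere _ _ _)
    filter_upwards [hs] with ω hω
    rw [mem_sphere_zero_iff_norm] at hω
    have hmem : ∀ θ, rotation (Circle.exp θ) ω ∈ B ↔ ω ∈ B := fun θ => by
      simp [B]
    by_cases hB : ω ∈ B
    · have : ∀ θ, f θ ω = (t - Circle.exp θ * ω)⁻¹ := fun θ => by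
        simp only [f, hdef]
        rw [indicator_of_mem ((hmem θ).2 hB), rotation_apply]
      simp only [this]
      rw [← intervalIntegral.integral_of_le (by positivity), integral_rotate_inv_sub]
      rcases lt_or_gt_of_ne hω with h1 | h1
      · rw [circleAverage_inv_sub_of_lt (norm_nonneg _) h1, indicator_of_mem (by simpa using h1)]
      · rw [circleAverage_inv_sub_of_gt ht0 h1, indicator_of_notMem (by simpa using h1.le),
          smul_zero]
    · have : ∀ θ, f θ ω = 0 := fun θ => by
        simp only [f, hdef]
        rw [indicator_of_notMem (fun h => hB ((hmem θ).1 h))]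
      have h2 : ω ∉ Metric.ball (0 : ℂ) ‖t‖ := fun h2 =>
        hB (Metric.ball_subset_ball ht.le h2)
      simp [this, indicator_of_notMem h2]
  rw [integral_congr_ae hin, integral_indicator (f := fun _ : ℂ => (2 * π) • t⁻¹)
    measurableSet_ball, setIntegral_const] at hswap
  have hvol : (volume : Measure ℂ).real (Metric.ball 0 ‖t‖) = π * ‖t‖ ^ 2 := by
    simp [Measure.real, Complex.volume_ball, mul_comm]
  rw [hvol] at hswap
  simp only [Measure.real, Measure.restrict_apply_univ, Real.volume_Ioc, sub_zero,
    ENNReal.toReal_ofReal (by positivity : 0 ≤ 2 * π), Complex.real_smul] at hswap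
  have hpi : ((2 * π : ℝ) : ℂ) ≠ 0 := by exact_mod_cast (by positivity : 2 * π ≠ 0)
  refine mul_left_cancel₀ hpi (hswap.trans ?_)
  have : ((‖t‖ : ℂ)) ^ 2 = t * (starRingEnd ℂ) t := by
    rw [Complex.mul_conj, Complex.normSq_eq_norm_sq]; push_cast; rfl
  push_cast
  rw [this]
  field_simp

theorem integral_ball_inv_sub {c w : ℂ} {R : ℝ} (hw : w ∈ Metric.ball c R) :
    ∫ ω, (Metric.ball c R).indicator (fun ω => (w - ω)⁻¹) ω = π * (starRingEnd ℂ) (w - c) := by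
  rw [mem_ball_iff_norm] at hw
  rw [← integral_ball_zero_inv_sub hw, ← integral_add_left_eq_self _ c]
  congr 1 with ω
  simp only [indicator, mem_ball_iff_norm, add_sub_cancel_left, sub_zero]
  congr 2
  ring

/-- The density `g` with its value at `w` subtracted on the ball `B(c, R)`. -/
def recentered (g : ℂ → ℝ) (c : ℂ) (R : ℝ) (w ω : ℂ) : ℝ :=
  g ω - (Metric.ball c R).indicator (fun _ => g w) ω

/-- The holomorphic part of the derivative of the Cauchy transform of `g` at points of `B(c, R)`:
the Beurling transform of `g`, regularised by subtracting the value of `g`. -/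
def beurlingPotential (g : ℂ → ℝ) (c : ℂ) (R : ℝ) (w : ℂ) : ℂ :=
  -∫ ω : ℂ, (recentered g c R w ω : ℂ) / (w - ω) ^ 2

section
variable {g : ℂ → ℝ} {A s K γ R : ℝ} {c w : ℂ}

theorem aestronglyMeasurable_recentered (hg : AEStronglyMeasurable g) :
    AEStronglyMeasurable fun ω => (recentered g c R w ω : ℂ) :=
  continuous_ofReal.comp_aestronglyMeasurable
    (hg.sub ((measurable_const.indicator measurableSet_ball).aestronglyMeasurable))

theorem norm_sub_ge_of_notMem_ball {ω : ℂ} (hω : ω ∉ Metric.ball c R) :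
    R - ‖w - c‖ ≤ ‖w - ω‖ := by
  rw [mem_ball_iff_norm', not_lt] at hω
  have := norm_sub_le (w - ω) (w - c)
  rw [sub_sub_sub_cancel_left] at this
  linarith

theorem norm_sub_le_of_mem_ball {ω : ℂ} (hw : w ∈ Metric.ball c R) (hω : ω ∈ Metric.ball c R) :
    ‖w - ω‖ < 2 * R := by
  rw [mem_ball_iff_norm] at hw
  rw [mem_ball_iff_norm'] at hω
  have := norm_add_le (w - c) (c - ω)
  rw [sub_add_sub_cancel] at this
  linarith

theorem abs_recentered_div_sq_le_of_mem
    (hH : ∀ x ∈ Metric.ball c R, ∀ y ∈ Metric.ball c R, |g x - g y| ≤ K * ‖x - y‖ ^ γ)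
    (hw : w ∈ Metric.ball c R) {ω : ℂ} (hω : ω ∈ Metric.ball c R) (hne : ω ≠ w) :
    |recentered g c R w ω| / ‖w - ω‖ ^ 2 ≤ K * ‖w - ω‖ ^ (γ - 2) := by
  have h1 : 0 < ‖w - ω‖ := norm_pos_iff.2 (sub_ne_zero.2 hne.symm)
  rw [recentered, indicator_of_mem hω, div_le_iff₀ (by positivity), abs_sub_comm, mul_assoc,
    ← Real.rpow_natCast, ← Real.rpow_add h1]
  simpa using hH w hw ω hω

theorem ae_norm_recentered_div_sq_le
    (hA : ∀ ω, |g ω| ≤ A * ‖ω‖ ^ (s - 2)) (hK : 0 ≤ K)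
    (hH : ∀ x ∈ Metric.ball c R, ∀ y ∈ Metric.ball c R, |g x - g y| ≤ K * ‖x - y‖ ^ γ)
    (hw : w ∈ Metric.ball c R) (hA0 : 0 ≤ A) :
    ∀ᵐ ω : ℂ, |recentered g c R w ω| / ‖w - ω‖ ^ 2 ≤
      K * ‖w - ω‖ ^ (γ - 2) + A * ((R - ‖w - c‖) ^ 2)⁻¹ * ‖ω‖ ^ (s - 2) := by
  have hd : 0 < R - ‖w - c‖ := by rw [mem_ball_iff_norm] at hw; linarith
  filter_upwards [ae_ne_point w] with ω hne
  by_cases hω : ω ∈ Metric.ball c R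
  · refine (abs_recentered_div_sq_le_of_mem hH hw hω hne).trans (le_add_of_nonneg_right ?_)
    positivity
  · have h1 := norm_sub_ge_of_notMem_ball (w := w) hω
    refine le_trans ?_ (le_add_of_nonneg_left (by positivity))
    rw [recentered, indicator_of_notMem hω, sub_zero, div_eq_mul_inv]
    calc _ ≤ (A * ‖ω‖ ^ (s - 2)) * ((R - ‖w - c‖) ^ 2)⁻¹ := by
          gcongr
          exact hA ω
      _ = _ := by ring

theorem integrable_recentered_div_sq (hs : 0 < s) (hs1 : s < 1) (hγ : 0 < γ)
    (hg : AEStronglyMeasurable g)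
    (hA : ∀ ω, |g ω| ≤ A * ‖ω‖ ^ (s - 2)) (hK : 0 ≤ K)
    (hH : ∀ x ∈ Metric.ball c R, ∀ y ∈ Metric.ball c R, |g x - g y| ≤ K * ‖x - y‖ ^ γ)
    (hw : w ∈ Metric.ball c R) (hA0 : 0 ≤ A) (hw0 : w ≠ 0) :
    Integrable fun ω : ℂ => (recentered g c R w ω : ℂ) / (w - ω) ^ 2 := by
  have hd : 0 < R - ‖w - c‖ := by rw [mem_ball_iff_norm] at hw; linarith
  have hR : 0 < R := by linarith [norm_nonneg (w - c)]
  have i1 := ((integrableOn_ball_norm_rpow hγ (2 * R) (by positivity)).comp_sub_left w).const_mul K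
  have i2 := (integrable_rieszKernel hs hs1 hw0).const_mul (A * (R - ‖w - c‖)⁻¹)
  refine (i1.add i2).mono' ?_ ?_
  · have h2 : Measurable fun ω : ℂ => ((w - ω) ^ 2)⁻¹ := by fun_prop
    exact (aestronglyMeasurable_recentered hg).mul h2.aestronglyMeasurable
  filter_upwards [ae_ne_point w] with ω hne
  rw [norm_div, norm_pow, Complex.norm_real, Real.norm_eq_abs]
  simp only [Pi.add_apply]
  by_cases hω : ω ∈ Metric.ball c R
  · refine (abs_recentered_div_sq_le_of_mem hH hw hω hne).trans ?_
    rw [indicator_of_mem (by simpa using norm_sub_le_of_mem_ball hw hω)]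
    exact le_add_of_nonneg_right (by positivity)
  · have h1 := norm_sub_ge_of_notMem_ball (w := w) hω
    have h2 : 0 < ‖w - ω‖ := by linarith
    refine le_trans ?_ (le_add_of_nonneg_left (mul_nonneg hK
      (indicator_nonneg (fun _ _ => by positivity) _)))
    rw [recentered, indicator_of_notMem hω, sub_zero, div_eq_mul_inv, pow_two, mul_inv]
    calc _ ≤ (A * ‖ω‖ ^ (s - 2)) * ((R - ‖w - c‖)⁻¹ * ‖w - ω‖⁻¹) := by
          gcongr
          exact hA ω
      _ = _ := by ring

theorem recentered_div_eq (z ω : ℂ) :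
    (recentered g c R w ω : ℂ) / (z - ω) =
      (g ω : ℂ) / (z - ω) - g w * (Metric.ball c R).indicator (fun ω => (z - ω)⁻¹) ω := by
  by_cases hω : ω ∈ Metric.ball c R
  · simp only [recentered, indicator_of_mem hω]; push_cast; ring
  · simp only [recentered, indicator_of_notMem hω]; simp

theorem cauchyPotential_eq_recentered (hs : 0 < s) (hs1 : s < 1) (hg : AEStronglyMeasurable g)
    (hA : ∀ ω, |g ω| ≤ A * ‖ω‖ ^ (s - 2)) {z : ℂ} (hz : z ∈ Metric.ball c R) (hz0 : z ≠ 0) :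
    Integrable (fun ω : ℂ => (recentered g c R w ω : ℂ) / (z - ω)) ∧
    cauchyPotential g z = (∫ ω : ℂ, (recentered g c R w ω : ℂ) / (z - ω)) +
      g w * (π * (starRingEnd ℂ) (z - c)) := by
  have i1 := integrable_cauchyKernel hs hs1 hg hA hz0
  have i2 := (integrable_indicator_ball_inv_sub c z R).const_mul (g w : ℂ)
  simp only [recentered_div_eq]
  refine ⟨i1.sub i2, ?_⟩
  rw [integral_sub i1 i2, integral_const_mul, integral_ball_inv_sub hz, cauchyPotential]
  ring

theorem hasFDerivAt_cauchyPotential (hs : 0 < s) (hs1 : s < 1) (hγ : 0 < γ) (hγ1 : γ < 1)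
    (hg : AEStronglyMeasurable g)
    (hA : ∀ ω, |g ω| ≤ A * ‖ω‖ ^ (s - 2)) (hK : 0 ≤ K)
    (hH : ∀ x ∈ Metric.ball c R, ∀ y ∈ Metric.ball c R, |g x - g y| ≤ K * ‖x - y‖ ^ γ)
    (hA0 : 0 ≤ A) (h0 : (0 : ℂ) ∉ Metric.ball c R) (hw : w ∈ Metric.ball c R) :
    HasFDerivAt (cauchyPotential g)
      (ContinuousLinearMap.mul ℝ ℂ (beurlingPotential g c R w) +
        (π * g w) • (conjCLE : ℂ →L[ℝ] ℂ)) w := by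
  have hd : 0 < R - ‖w - c‖ := by rw [mem_ball_iff_norm] at hw; linarith
  have hw0 : w ≠ 0 := fun h => h0 (h ▸ hw)
  refine hasFDerivAt_of_integral_error (P := K) (Q := A * ((R - ‖w - c‖) ^ 2)⁻¹)
    hw0 hγ hγ1 hs hs1 hd (by positivity) fun t ht htd => ?_
  have hwt : w + t ∈ Metric.ball c R := by
    rw [mem_ball_iff_norm]
    have := norm_add_le (w - c) t
    rw [show w + t - c = w - c + t by ring]
    linarith
  have hwt0 : w + t ≠ 0 := fun h => h0 (h ▸ hwt)
  obtain ⟨i1, e1⟩ := cauchyPotential_eq_recentered (w := w) hs hs1 hg hA hw hw0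
  obtain ⟨i2, e2⟩ := cauchyPotential_eq_recentered (w := w) hs hs1 hg hA hwt hwt0
  have i3 := integrable_recentered_div_sq hs hs1 hγ hg hA hK hH hw hA0 hw0
  refine ⟨fun ω => (recentered g c R w ω : ℂ) / (w + t - ω) -
    (recentered g c R w ω : ℂ) / (w - ω) + (recentered g c R w ω : ℂ) / (w - ω) ^ 2 * t, ?_, ?_⟩
  · rw [integral_add (f := fun ω => (recentered g c R w ω : ℂ) / (w + t - ω) -
      (recentered g c R w ω : ℂ) / (w - ω)) (i2.sub i1) (i3.mul_const t), integral_sub i2 i1,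
      integral_mul_const, e1, e2]
    simp [beurlingPotential]
    ring
  · filter_upwards [ae_ne_point w, ae_ne_point (w + t),
      ae_norm_recentered_div_sq_le hA hK hH hw hA0] with ω h1 h2 h3
    have p1 : w - ω ≠ 0 := sub_ne_zero.2 h1.symm
    have p2 : w + t - ω ≠ 0 := sub_ne_zero.2 h2.symm
    have : (recentered g c R w ω : ℂ) / (w + t - ω) -
        (recentered g c R w ω : ℂ) / (w - ω) + (recentered g c R w ω : ℂ) / (w - ω) ^ 2 * t =
        t ^ 2 * ((recentered g c R w ω : ℂ) / (w - ω) ^ 2 * (w + t - ω)⁻¹) := by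
      field_simp
      ring
    rw [this, norm_mul, norm_pow, norm_mul, norm_div, norm_inv, norm_pow, Complex.norm_real,
      Real.norm_eq_abs]
    gcongr

theorem continuousWithinAt_of_holder {t : Set ℂ} (hγ : 0 < γ)
    (h : ∀ y ∈ t, |g y - g w| ≤ K * ‖y - w‖ ^ γ) : ContinuousWithinAt g t w := by
  have h1 : Continuous fun y : ℂ => K * ‖y - w‖ ^ γ :=
    continuous_const.mul ((by fun_prop : Continuous fun y : ℂ => ‖y - w‖).rpow_const
      fun _ => Or.inr hγ.le)
  have h2 : Tendsto (fun y => K * ‖y - w‖ ^ γ) (𝓝[t] w) (𝓝 0) := by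
    simpa [Real.zero_rpow hγ.ne'] using (h1.tendsto w).mono_left nhdsWithin_le_nhds
  rw [ContinuousWithinAt, tendsto_iff_norm_sub_tendsto_zero]
  exact squeeze_zero' (Eventually.of_forall fun _ => norm_nonneg _)
    (eventually_nhdsWithin_of_forall h) h2

theorem continuousAt_integral_ball_div_sq (hγ : 0 < γ) (hg : AEStronglyMeasurable g)
    (hK : 0 ≤ K)
    (hH : ∀ x ∈ Metric.ball c R, ∀ y ∈ Metric.ball c R, |g x - g y| ≤ K * ‖x - y‖ ^ γ)
    (hw : w ∈ Metric.ball c R) :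
    ContinuousAt (fun z => ∫ ω : ℂ, (Metric.ball c R).indicator
      (fun ω => ((g ω - g z : ℝ) : ℂ) / (z - ω) ^ 2) ω) w := by
  have hR : 0 < R := by
    rw [mem_ball_iff_norm] at hw; linarith [norm_nonneg (w - c)]
  set B := Metric.ball c R
  have hB : ∀ x ∈ B, B ∈ 𝓝 x := fun x hx => Metric.isOpen_ball.mem_nhds hx
  have hgc : ∀ x ∈ B, ContinuousAt g x := fun x hx =>
    (continuousWithinAt_of_holder hγ fun y hy => hH y hy x hx).continuousAt (hB x hx)
  have hsub : ∀ z : ℂ, (∫ ω : ℂ, B.indicator (fun ω => ((g ω - g z : ℝ) : ℂ) / (z - ω) ^ 2) ω) =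
      ∫ η : ℂ, B.indicator (fun ω => ((g ω - g z : ℝ) : ℂ) / (z - ω) ^ 2) (z - η) := fun z =>
    (integral_sub_left_eq_self _ _ z).symm
  simp only [hsub]
  refine continuousAt_of_dominated (bound := fun η =>
    K * (Metric.ball (0 : ℂ) (2 * R)).indicator (fun η => ‖η‖ ^ (γ - 2)) η) ?_ ?_
    ((integrableOn_ball_norm_rpow hγ (2 * R) (by positivity)).const_mul K) ?_
  · refine Eventually.of_forall fun z => ?_
    have h1 : AEStronglyMeasurable (fun ω => ((g ω - g z : ℝ) : ℂ)) :=
      continuous_ofReal.comp_aestronglyMeasurable (hg.sub aestronglyMeasurable_const)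
    have h2 : Measurable fun ω : ℂ => ((z - ω) ^ 2)⁻¹ := by fun_prop
    exact ((h1.mul h2.aestronglyMeasurable).indicator measurableSet_ball
      ).comp_measurePreserving (Measure.measurePreserving_sub_left volume z)
  · filter_upwards [hB w hw] with z hz
    filter_upwards [ae_ne_point 0] with η hη
    by_cases hm : z - η ∈ B
    · have h1 := abs_recentered_div_sq_le_of_mem hH hz hm (by simpa using hη)
      have h2 := norm_sub_le_of_mem_ball hz hm
      rw [sub_sub_cancel] at h1 h2
      rw [indicator_of_mem hm, indicator_of_mem (by simpa using h2), norm_div, norm_pow,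
        Complex.norm_real, Real.norm_eq_abs, sub_sub_cancel]
      rwa [recentered, indicator_of_mem hm] at h1
    · rw [indicator_of_notMem hm, norm_zero]
      exact mul_nonneg hK (indicator_nonneg (fun _ _ => by positivity) _)
  · have hs : ∀ᵐ η : ℂ, w - η ∉ Metric.sphere c R :=
      (Measure.measurePreserving_sub_left volume w).quasiMeasurePreserving.ae
        (compl_mem_ae_iff.2 (Measure.addHaar_sphere volume c R))
    filter_upwards [hs, ae_ne_point 0] with η h1 hη
    have hcs : ContinuousAt (fun z => z - η) w := by fun_prop
    by_cases hm : w - η ∈ B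
    · have hev : (fun z => B.indicator (fun ω => ((g ω - g z : ℝ) : ℂ) / (z - ω) ^ 2) (z - η))
          =ᶠ[𝓝 w] fun z => ((g (z - η) - g z : ℝ) : ℂ) / η ^ 2 := by
        filter_upwards [hcs (hB _ hm)] with z (hz : z - η ∈ B)
        rw [indicator_of_mem hz, sub_sub_cancel]
      rw [continuousAt_congr hev]
      have c1 : ContinuousAt (fun z => g (z - η)) w :=
        ContinuousAt.comp (f := fun z => z - η) (hgc _ hm) hcs
      have c2 : ContinuousAt (fun z => ((g (z - η) - g z : ℝ) : ℂ)) w :=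
        continuous_ofReal.continuousAt.comp (c1.sub (hgc w hw))
      exact c2.div_const _
    · have hcb : w - η ∈ (Metric.closedBall c R)ᶜ := by
        simp only [B, mem_ball_iff_norm, mem_sphere_iff_norm, mem_compl_iff,
          mem_closedBall_iff_norm, not_lt, not_le] at hm h1 ⊢
        exact lt_of_le_of_ne hm (Ne.symm h1)
      have hev : (fun z => B.indicator (fun ω => ((g ω - g z : ℝ) : ℂ) / (z - ω) ^ 2) (z - η))
          =ᶠ[𝓝 w] fun _ => 0 := by
        filter_upwards [hcs (Metric.isClosed_closedBall.isOpen_compl.mem_nhds hcb)] with z hz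
        exact indicator_of_notMem (fun h => hz (Metric.ball_subset_closedBall h)) _
      rw [continuousAt_congr hev]
      exact continuousAt_const

theorem continuousAt_integral_compl_ball_div_sq (hs : 0 < s) (hs1 : s < 1)
    (hg : AEStronglyMeasurable g) (hA : ∀ ω, |g ω| ≤ A * ‖ω‖ ^ (s - 2)) (hA0 : 0 ≤ A)
    (hw : w ∈ Metric.ball c R) (hw0 : w ≠ 0) :
    ContinuousAt (fun z => ∫ ω : ℂ, (Metric.ball c R)ᶜ.indicator
      (fun ω => (g ω : ℂ) / (z - ω) ^ 2) ω) w := by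
  have hd : 0 < R - ‖w - c‖ := by rw [mem_ball_iff_norm] at hw; linarith
  set d := R - ‖w - c‖ with hdd
  refine continuousAt_of_dominated (bound := fun ω =>
    (4 * A / d) * (‖ω‖ ^ (s - 2) * ‖w - ω‖⁻¹)) ?_ ?_
    ((integrable_rieszKernel hs hs1 hw0).const_mul _) ?_
  · refine Eventually.of_forall fun z => ?_
    have h1 : AEStronglyMeasurable (fun ω => (g ω : ℂ)) :=
      continuous_ofReal.comp_aestronglyMeasurable hg
    have h2 : Measurable fun ω : ℂ => ((z - ω) ^ 2)⁻¹ := by fun_prop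
    exact (h1.mul h2.aestronglyMeasurable).indicator measurableSet_ball.compl
  · filter_upwards [Metric.ball_mem_nhds w (half_pos hd)] with z hz
    refine Eventually.of_forall fun ω => ?_
    by_cases hω : ω ∈ Metric.ball c R
    · rw [indicator_of_notMem (notMem_compl_iff.2 hω), norm_zero]
      positivity
    · have h1 := norm_sub_ge_of_notMem_ball (w := w) hω
      rw [← hdd] at h1
      have h1' : 0 < ‖w - ω‖ := by linarith
      rw [mem_ball_iff_norm'] at hz
      have h2 : ‖w - ω‖ / 2 ≤ ‖z - ω‖ := by
        have := norm_add_le (w - z) (z - ω)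
        rw [sub_add_sub_cancel] at this
        linarith
      rw [indicator_of_mem hω, norm_div, norm_pow, Complex.norm_real, Real.norm_eq_abs,
        div_eq_mul_inv]
      calc _ ≤ (A * ‖ω‖ ^ (s - 2)) * ((‖w - ω‖ / 2) ^ 2)⁻¹ := by
            gcongr
            exact hA ω
        _ = 4 * A * (‖ω‖ ^ (s - 2) * ‖w - ω‖⁻¹) * ‖w - ω‖⁻¹ := by
            field_simp
            ring
        _ ≤ 4 * A * (‖ω‖ ^ (s - 2) * ‖w - ω‖⁻¹) * d⁻¹ := by gcongr
        _ = _ := by ring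
  · refine Eventually.of_forall fun ω => ?_
    by_cases hω : ω ∈ Metric.ball c R
    · simp [indicator_of_notMem (fun h => h hω : ω ∉ (Metric.ball c R)ᶜ)]
      exact continuousAt_const
    · have h1 := norm_sub_ge_of_notMem_ball (w := w) hω
      have h2 : w - ω ≠ 0 := norm_pos_iff.1 (by linarith)
      simp only [indicator_of_mem (show ω ∈ (Metric.ball c R)ᶜ from hω)]
      exact continuousAt_const.div (by fun_prop) (pow_ne_zero 2 h2)

theorem continuousOn_beurlingPotential (hs : 0 < s) (hs1 : s < 1) (hγ : 0 < γ)
    (hg : AEStronglyMeasurable g)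
    (hA : ∀ ω, |g ω| ≤ A * ‖ω‖ ^ (s - 2)) (hK : 0 ≤ K)
    (hH : ∀ x ∈ Metric.ball c R, ∀ y ∈ Metric.ball c R, |g x - g y| ≤ K * ‖x - y‖ ^ γ)
    (hA0 : 0 ≤ A) (h0 : (0 : ℂ) ∉ Metric.ball c R) :
    ContinuousOn (beurlingPotential g c R) (Metric.ball c R) := by
  have heq : EqOn (beurlingPotential g c R) (fun z =>
      -((∫ ω : ℂ, (Metric.ball c R).indicator
        (fun ω => ((g ω - g z : ℝ) : ℂ) / (z - ω) ^ 2) ω) +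
      ∫ ω : ℂ, (Metric.ball c R)ᶜ.indicator (fun ω => (g ω : ℂ) / (z - ω) ^ 2) ω))
      (Metric.ball c R) := by
    intro z hz
    have i := integrable_recentered_div_sq hs hs1 hγ hg hA hK hH hz hA0 fun h => h0 (h ▸ hz)
    have e1 : (Metric.ball c R).indicator (fun ω => ((g ω - g z : ℝ) : ℂ) / (z - ω) ^ 2) =
        (Metric.ball c R).indicator (fun ω => (recentered g c R z ω : ℂ) / (z - ω) ^ 2) :=
      indicator_congr fun ω hω => by rw [recentered, indicator_of_mem hω]
    have e2 : (Metric.ball c R)ᶜ.indicator (fun ω => (g ω : ℂ) / (z - ω) ^ 2) =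
        (Metric.ball c R)ᶜ.indicator (fun ω => (recentered g c R z ω : ℂ) / (z - ω) ^ 2) :=
      indicator_congr fun ω hω => by rw [recentered, indicator_of_notMem hω, sub_zero]
    simp only [e1, e2]
    rw [integral_indicator measurableSet_ball, integral_indicator measurableSet_ball.compl,
      integral_add_compl measurableSet_ball i, beurlingPotential]
  refine ContinuousOn.congr (fun z hz => ContinuousAt.continuousWithinAt ?_) heq
  exact ((continuousAt_integral_ball_div_sq hγ hg hK hH hz).add
    (continuousAt_integral_compl_ball_div_sq hs hs1 hg hA hA0 hz fun h => h0 (h ▸ hz))).neg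

end

section
variable {g : ℂ → ℝ} {A s : ℝ} {w : ℂ}

theorem logPotential_conj (hodd : ∀ ω, g ((starRingEnd ℂ) ω) = -g ω) (w : ℂ) :
    logPotential g ((starRingEnd ℂ) w) = -logPotential g w := by
  have h := (conjLIE.measurePreserving).integral_comp
    conjLIE.toHomeomorph.measurableEmbedding
    (fun ω => (Real.log ‖(starRingEnd ℂ) w - ω‖ - Real.log ‖1 - ω‖) * g ω)
  rw [logPotential, ← h, logPotential, ← integral_neg]
  congr with ω
  have h1 : ‖(starRingEnd ℂ) w - (starRingEnd ℂ) ω‖ = ‖w - ω‖ := by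
    rw [← map_sub, RCLike.norm_conj]
  have h2 : ‖1 - (starRingEnd ℂ) ω‖ = ‖1 - ω‖ := by
    rw [← map_one (starRingEnd ℂ), ← map_sub, RCLike.norm_conj, map_one]
  rw [conjLIE_apply, hodd, h1, h2]
  ring

theorem logPotential_ofReal (hodd : ∀ ω, g ((starRingEnd ℂ) ω) = -g ω) (x : ℝ) :
    logPotential g x = 0 := by
  have := logPotential_conj hodd x
  rw [conj_ofReal] at this
  linarith

theorem abs_logPotential_le (hs : 0 < s) (hs1 : s < 1) (hg : AEStronglyMeasurable g)
    (hA : ∀ ω, |g ω| ≤ A * ‖ω‖ ^ (s - 2)) (hA0 : 0 ≤ A)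
    (hodd : ∀ ω, g ((starRingEnd ℂ) ω) = -g ω) (w : ℂ) :
    |logPotential g w| ≤ 4 * A * rieszConst s * ‖w‖ ^ s := by
  have hc := rieszConst_nonneg s
  rcases eq_or_ne w 0 with rfl | hw
  · have := logPotential_ofReal hodd 0
    rw [ofReal_zero] at this
    rw [this, abs_zero]
    positivity
  have hw' : 0 < ‖w‖ := norm_pos_iff.2 hw
  have hn : ((‖w‖ : ℝ) : ℂ) ≠ 0 := ofReal_ne_zero.2 hw'.ne'
  have h := abs_logPotential_sub_le hs hs1 hg hA hw hn
  rw [logPotential_ofReal hodd, sub_zero, norm_real, norm_norm] at h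
  have h2 : ‖w - (‖w‖ : ℂ)‖ ≤ 2 * ‖w‖ := by
    refine (norm_sub_le _ _).trans ?_
    rw [norm_real, norm_norm]
    linarith
  calc _ ≤ A * (2 * ‖w‖) * (rieszConst s * ‖w‖ ^ (s - 1) + rieszConst s * ‖w‖ ^ (s - 1)) := by
        refine h.trans ?_
        gcongr
    _ = 4 * A * rieszConst s * (‖w‖ ^ (s - 1) * ‖w‖) := by ring
    _ = _ := by rw [← Real.rpow_add_one hw'.ne', sub_add_cancel]

theorem continuous_logPotential (hs : 0 < s) (hs1 : s < 1) (hg : AEStronglyMeasurable g)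
    (hA : ∀ ω, |g ω| ≤ A * ‖ω‖ ^ (s - 2)) (hA0 : 0 ≤ A)
    (hodd : ∀ ω, g ((starRingEnd ℂ) ω) = -g ω) : Continuous (logPotential g) := by
  refine continuous_iff_continuousAt.2 fun w => ?_
  rcases eq_or_ne w 0 with rfl | hw
  · have h0 : logPotential g 0 = 0 := by simpa using logPotential_ofReal hodd 0
    have hb : Continuous fun w : ℂ => 4 * A * rieszConst s * ‖w‖ ^ s :=
      continuous_const.mul (continuous_norm.rpow_const fun _ => Or.inr hs.le)
    rw [ContinuousAt, h0]
    refine squeeze_zero_norm (abs_logPotential_le hs hs1 hg hA hA0 hodd) ?_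
    simpa [Real.zero_rpow hs.ne'] using hb.tendsto 0
  · exact (hasFDerivAt_logPotential hs hs1 hg hA0 hA hw).continuousAt

end

section
variable {g : ℂ → ℝ} {A s K γ R : ℝ} {c : ℂ}

theorem contDiffAt_cauchyPotential (hs : 0 < s) (hs1 : s < 1) (hγ : 0 < γ) (hγ1 : γ < 1)
    (hg : AEStronglyMeasurable g)
    (hA : ∀ ω, |g ω| ≤ A * ‖ω‖ ^ (s - 2)) (hK : 0 ≤ K)
    (hH : ∀ x ∈ Metric.ball c R, ∀ y ∈ Metric.ball c R, |g x - g y| ≤ K * ‖x - y‖ ^ γ)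
    (hA0 : 0 ≤ A) (h0 : (0 : ℂ) ∉ Metric.ball c R) (hR : 0 < R) :
    ContDiffAt ℝ 1 (cauchyPotential g) c := by
  refine contDiffAt_one_iff.2 ⟨_, Metric.ball c R, Metric.ball_mem_nhds c hR, ?_, fun w hw =>
    hasFDerivAt_cauchyPotential hs hs1 hγ hγ1 hg hA hK hH hA0 h0 hw⟩
  have hgc : ContinuousOn g (Metric.ball c R) := fun x hx =>
    continuousWithinAt_of_holder hγ fun y hy => hH y hy x hx
  have hB := continuousOn_beurlingPotential hs hs1 hγ hg hA hK hH hA0 h0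
  exact ((ContinuousLinearMap.mul ℝ ℂ).continuous.comp_continuousOn hB).add
    ((continuousOn_const.mul hgc).smul continuousOn_const)

end

section
variable {β : ℝ} {z w : ℂ}

theorem sector_subset_slitPlane (hβ : β < 1 / 2) : Sector β ⊆ slitPlane := fun z hz =>
  mem_slitPlane_iff_arg.2 ⟨by
    have := hz.2.2
    have := Real.pi_pos
    nlinarith, hz.1⟩

theorem isOpen_sector (hβ : β < 1 / 2) : IsOpen (Sector β) := by
  have h : Sector β = slitPlane ∩ arg ⁻¹' Ioo 0 (β * π) := by
    ext z
    exact ⟨fun hz => ⟨sector_subset_slitPlane hβ hz, hz.2⟩,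
      fun hz => ⟨slitPlane_ne_zero hz.1, hz.2⟩⟩
  rw [h]
  exact ContinuousOn.isOpen_inter_preimage
    (fun z hz => (continuousAt_arg hz).continuousWithinAt) isOpen_slitPlane isOpen_Ioo

theorem mem_slitPlane_and_arg_of_mem_closure_sector (hβ : β < 1 / 2)
    (hz : z ∈ closure (Sector β)) (hz0 : z ≠ 0) : z ∈ slitPlane ∧ arg z ∈ Icc 0 (β * π) := by
  have hre : 0 ≤ z.re := by
    have hcl : IsClosed {z : ℂ | 0 ≤ z.re} := isClosed_le continuous_const continuous_re
    refine closure_minimal (fun w hw => ?_) hcl hz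
    refine abs_arg_le_pi_div_two_iff.1 ?_
    have h1 := hw.2.2
    rw [abs_of_pos hw.2.1]
    nlinarith [Real.pi_pos]
  have hs : z ∈ slitPlane := by
    rw [mem_slitPlane_iff]
    by_contra! h
    exact hz0 (Complex.ext (le_antisymm h.1 hre) h.2)
  refine ⟨hs, ?_⟩
  refine closure_minimal ?_ isClosed_Icc (mem_closure_image (continuousAt_arg hs) hz)
  rintro _ ⟨w, hw, rfl⟩
  exact ⟨hw.2.1.le, hw.2.2.le⟩

theorem im_cpow_inv_eq_zero_of_mem_frontier_sector (hβ0 : 0 < β) (hβ : β < 1 / 2)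
    (hz : z ∈ frontier (Sector β)) : (z ^ ((β⁻¹ : ℝ) : ℂ)).im = 0 := by
  rw [cpow_ofReal_im]
  rcases eq_or_ne z 0 with rfl | hz0
  · simp
  rw [frontier, (isOpen_sector hβ).interior_eq] at hz
  obtain ⟨-, h1, h2⟩ := mem_slitPlane_and_arg_of_mem_closure_sector hβ hz.1 hz0
  rcases h1.eq_or_lt with h | h
  · simp [← h]
  rcases h2.eq_or_lt with h' | h'
  · rw [h', mul_right_comm, mul_inv_cancel₀ hβ0.ne', one_mul, Real.sin_pi, mul_zero]
  · exact absurd ⟨hz0, h, h'⟩ hz.2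

theorem arg_mul_inv_mem_Ioo (hβ0 : 0 < β) (hz : z ∈ Sector β) : arg z * β⁻¹ ∈ Ioo 0 π := by
  refine ⟨mul_pos hz.2.1 (inv_pos.2 hβ0), ?_⟩
  rw [← div_eq_mul_inv, div_lt_iff₀ hβ0, mul_comm]
  exact hz.2.2

theorem im_cpow_inv_pos (hβ0 : 0 < β) (hz : z ∈ Sector β) :
    0 < (z ^ ((β⁻¹ : ℝ) : ℂ)).im := by
  have h := arg_mul_inv_mem_Ioo hβ0 hz
  rw [cpow_ofReal_im]
  exact mul_pos (Real.rpow_pos_of_pos (norm_pos_iff.2 hz.1) _) (Real.sin_pos_of_mem_Ioo h)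

theorem cpow_inv_cpow (hβ0 : 0 < β) (hz : z ∈ Sector β) :
    (z ^ ((β⁻¹ : ℝ) : ℂ)) ^ (β : ℂ) = z := by
  have h := arg_mul_inv_mem_Ioo hβ0 hz
  have him : (log z * ((β⁻¹ : ℝ) : ℂ)).im = arg z * β⁻¹ := by rw [im_mul_ofReal, log_im]
  rw [← cpow_mul _ (him ▸ by linarith [h.1, Real.pi_pos]) (him ▸ h.2.le), ← ofReal_mul,
    inv_mul_cancel₀ hβ0.ne', ofReal_one, cpow_one]

theorem mem_slitPlane_of_im_pos (hw : 0 < w.im) : w ∈ slitPlane :=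
  mem_slitPlane_iff.2 (Or.inr hw.ne')

theorem cpow_mem_sector (hβ0 : 0 < β) (hβ : β < 1 / 2) (hw : 0 < w.im) :
    w ^ (β : ℂ) ∈ Sector β := by
  have hw0 : w ≠ 0 := slitPlane_ne_zero (mem_slitPlane_of_im_pos hw)
  have h1 : 0 < arg w := by
    refine lt_of_le_of_ne (arg_nonneg_iff.2 hw.le) fun h => hw.ne' ?_
    exact (arg_eq_zero_iff.1 h.symm).2
  have h2 : arg w < π := arg_lt_pi_iff.2 (Or.inr hw.ne')
  have h3 : arg (w ^ (β : ℂ)) = arg w * β := by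
    rw [cpow_ofReal]
    push_cast
    rw [← ofReal_mul]
    refine arg_mul_cos_add_sin_mul_I (Real.rpow_pos_of_pos (norm_pos_iff.2 hw0) _) ⟨?_, ?_⟩
    · nlinarith [Real.pi_pos, mul_pos h1 hβ0]
    · nlinarith [Real.pi_pos]
  refine ⟨fun h => ?_, ?_, ?_⟩
  · exact hw0 ((cpow_eq_zero_iff _ _).1 h).1
  · rw [h3]; positivity
  · rw [h3, mul_comm]; gcongr

end

/-- The density on the upper half-plane `{0 < im w}` obtained from a density `f` on the sector of
angle `βπ` through the conformal map `w ↦ w ^ β`, extended by zero. -/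
def halfPlaneDensity (β : ℝ) (f : ℂ → ℝ) : ℂ → ℝ :=
  {w : ℂ | 0 < w.im}.indicator fun w => β ^ 2 * ‖w‖ ^ (2 * β - 2) * f (w ^ (β : ℂ))

/-- The extension of `halfPlaneDensity` to the plane that is odd under conjugation. -/
def oddDensity (β : ℝ) (f : ℂ → ℝ) (w : ℂ) : ℝ :=
  halfPlaneDensity β f w - halfPlaneDensity β f ((starRingEnd ℂ) w)

section
variable {β M : ℝ} {f : ℂ → ℝ} {w : ℂ}

theorem halfPlaneDensity_of_pos (hw : 0 < w.im) :
    halfPlaneDensity β f w = β ^ 2 * ‖w‖ ^ (2 * β - 2) * f (w ^ (β : ℂ)) :=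
  indicator_of_mem (s := {w : ℂ | 0 < w.im}) hw _

theorem halfPlaneDensity_of_nonpos (hw : w.im ≤ 0) : halfPlaneDensity β f w = 0 :=
  indicator_of_notMem (s := {w : ℂ | 0 < w.im}) (not_lt.2 hw) _

theorem oddDensity_of_pos (hw : 0 < w.im) :
    oddDensity β f w = β ^ 2 * ‖w‖ ^ (2 * β - 2) * f (w ^ (β : ℂ)) := by
  rw [oddDensity, halfPlaneDensity_of_pos hw, halfPlaneDensity_of_nonpos (by simpa using hw.le),
    sub_zero]

theorem oddDensity_conj (w : ℂ) : oddDensity β f ((starRingEnd ℂ) w) = -oddDensity β f w := by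
  rw [oddDensity, oddDensity, conj_conj, neg_sub]

theorem abs_oddDensity_le (hβ0 : 0 < β) (hβ : β < 1 / 2) (hM : ∀ z ∈ Sector β, |f z| ≤ M)
    (hM0 : 0 ≤ M) (w : ℂ) : |oddDensity β f w| ≤ β ^ 2 * M * ‖w‖ ^ (2 * β - 2) := by
  have hpos : ∀ w : ℂ, 0 < w.im → |oddDensity β f w| ≤ β ^ 2 * M * ‖w‖ ^ (2 * β - 2) := by
    intro w hw
    rw [oddDensity_of_pos hw, abs_mul, abs_of_nonneg (by positivity), mul_right_comm]
    gcongr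
    exact hM _ (cpow_mem_sector hβ0 hβ hw)
  rcases lt_trichotomy w.im 0 with h | h | h
  · have := hpos ((starRingEnd ℂ) w) (by simpa using h)
    rwa [oddDensity_conj, abs_neg, RCLike.norm_conj] at this
  · rw [oddDensity, halfPlaneDensity_of_nonpos h.le,
      halfPlaneDensity_of_nonpos (by rw [conj_im, h, neg_zero]), sub_zero, abs_zero]
    positivity
  · exact hpos w h

theorem hasStrictDerivAt_cpow_const (r : ℂ) (hw : w ∈ slitPlane) :
    HasStrictDerivAt (fun z : ℂ => z ^ r) (r * w ^ (r - 1)) w := by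
  simpa using (hasStrictDerivAt_id w).cpow_const (c := r) hw

theorem aestronglyMeasurable_oddDensity (hβ0 : 0 < β) (hβ : β < 1 / 2)
    (hf : ContinuousOn f (Sector β)) : AEStronglyMeasurable (oddDensity β f) := by
  have hm : MeasurableSet {w : ℂ | 0 < w.im} :=
    (isOpen_lt continuous_const continuous_im).measurableSet
  have hc : ContinuousOn (fun w : ℂ => β ^ 2 * ‖w‖ ^ (2 * β - 2) * f (w ^ (β : ℂ)))
      {w : ℂ | 0 < w.im} := by
    refine (continuousOn_const.mul (continuousOn_id.norm.rpow_const fun w hw => Or.inl ?_)).mul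
      (hf.comp (fun w hw => ?_) fun w hw => cpow_mem_sector hβ0 hβ hw)
    · exact norm_ne_zero_iff.2 (slitPlane_ne_zero (mem_slitPlane_of_im_pos hw))
    · exact (hasStrictDerivAt_cpow_const _
        (mem_slitPlane_of_im_pos hw)).hasDerivAt.continuousAt.continuousWithinAt
  have h1 : AEStronglyMeasurable (halfPlaneDensity β f) :=
    (aestronglyMeasurable_indicator_iff hm).2 (hc.aestronglyMeasurable hm)
  exact h1.sub (h1.comp_measurePreserving conjLIE.measurePreserving)

theorem oddDensity_locally_holder (hβ0 : 0 < β) (hβ : β < 1 / 2)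
    (hM : ∀ z ∈ Sector β, |f z| ≤ M) (hM0 : 0 ≤ M)
    (hf : ∀ z ∈ Sector β, ∃ ε > (0 : ℝ), ∃ K γ : ℝ, 0 < γ ∧ γ ≤ 1 ∧
      ∀ w ∈ Sector β ∩ Metric.ball z ε, ∀ w' ∈ Sector β ∩ Metric.ball z ε,
        |f w - f w'| ≤ K * ‖w - w'‖ ^ γ) (hw : 0 < w.im) :
    ∃ R K γ : ℝ, 0 < R ∧ 0 ≤ K ∧ 0 < γ ∧ γ < 1 ∧ (0 : ℂ) ∉ Metric.ball w R ∧
      ∀ x ∈ Metric.ball w R, ∀ y ∈ Metric.ball w R,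
        |oddDensity β f x - oddDensity β f y| ≤ K * ‖x - y‖ ^ γ := by
  have hw0 : w ≠ 0 := slitPlane_ne_zero (mem_slitPlane_of_im_pos hw)
  set p : ℂ → ℝ := fun z => β ^ 2 * ‖z‖ ^ (2 * β - 2)
  set q : ℂ → ℂ := fun z => z ^ (β : ℂ)
  have hp : ContDiffAt ℝ 1 p w := contDiffAt_const.mul
    ((contDiffAt_norm ℝ hw0).rpow_const_of_ne (norm_ne_zero_iff.2 hw0))
  have hq := hasStrictDerivAt_cpow_const (β : ℂ) (mem_slitPlane_of_im_pos hw)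
  obtain ⟨Lp, U, hU, hLp⟩ := hp.exists_lipschitzOnWith
  obtain ⟨Lq, W, hW, hLq⟩ := hq.hasStrictFDerivAt.exists_lipschitzOnWith
  obtain ⟨ε, hε, K, γ, hγ, hγ1, hH⟩ := hf _ (cpow_mem_sector hβ0 hβ hw)
  have hpb : ∀ᶠ z in 𝓝 w, |p z| < |p w| + 1 :=
    hp.continuousAt.abs.eventually_lt_const (lt_add_one _)
  have hqb : ∀ᶠ z in 𝓝 w, q z ∈ Metric.ball (q w) ε :=
    hq.hasDerivAt.continuousAt (Metric.ball_mem_nhds _ hε)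
  have him : ∀ᶠ z : ℂ in 𝓝 w, 0 < z.im := (isOpen_lt continuous_const continuous_im).mem_nhds hw
  obtain ⟨R, hR, hball⟩ := Metric.eventually_nhds_iff_ball.1
    (hpb.and (hqb.and (him.and ((show ∀ᶠ z in 𝓝 w, z ∈ U from hU).and
      ((show ∀ᶠ z in 𝓝 w, z ∈ W from hW).and
        (Metric.ball_mem_nhds w (half_pos one_pos) : ∀ᶠ z in 𝓝 w, z ∈ Metric.ball w (1 / 2)))))))
  refine ⟨R, Lp * M + (|p w| + 1) * (|K| * Lq ^ γ), γ / 2, hR, by positivity, by positivity,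
    by linarith, fun h => lt_irrefl _ (hball 0 h).2.2.1, fun x hx y hy => ?_⟩
  obtain ⟨-, hxq, hxi, hxU, hxW, hx1⟩ := hball x hx
  obtain ⟨hyp, hyq, hyi, hyU, hyW, hy1⟩ := hball y hy
  have hd0 := norm_nonneg (x - y)
  have hd1 : ‖x - y‖ ≤ 1 := by
    rw [← dist_eq_norm]
    linarith [dist_triangle_right x y w, Metric.mem_ball.1 hx1, Metric.mem_ball.1 hy1]
  have e1 : ‖x - y‖ ≤ ‖x - y‖ ^ (γ / 2) :=
    Real.self_le_rpow_of_le_one hd0 hd1 (by linarith)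
  have e2 : ‖x - y‖ ^ γ ≤ ‖x - y‖ ^ (γ / 2) :=
    Real.rpow_le_rpow_of_exponent_ge' hd0 hd1 (by positivity) (by linarith)
  have b1 : |p x - p y| ≤ Lp * ‖x - y‖ := hLp.norm_sub_le hxU hyU
  have b2 : ‖q x - q y‖ ≤ Lq * ‖x - y‖ := hLq.norm_sub_le hxW hyW
  have sx := cpow_mem_sector hβ0 hβ hxi
  have sy := cpow_mem_sector hβ0 hβ hyi
  have b3 : |f (q x) - f (q y)| ≤ |K| * (Lq ^ γ * ‖x - y‖ ^ (γ / 2)) :=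
    calc _ ≤ K * ‖q x - q y‖ ^ γ := hH _ ⟨sx, hxq⟩ _ ⟨sy, hyq⟩
      _ ≤ |K| * (Lq * ‖x - y‖) ^ γ := by
          gcongr
          exact le_abs_self K
      _ = |K| * (Lq ^ γ * ‖x - y‖ ^ γ) := by rw [Real.mul_rpow Lq.coe_nonneg hd0]
      _ ≤ _ := by gcongr
  rw [oddDensity_of_pos hxi, oddDensity_of_pos hyi]
  calc |p x * f (q x) - p y * f (q y)|
      = |(p x - p y) * f (q x) + p y * (f (q x) - f (q y))| := by ring_nf
    _ ≤ |p x - p y| * |f (q x)| + |p y| * |f (q x) - f (q y)| := by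
        rw [← abs_mul, ← abs_mul]
        exact abs_add_le _ _
    _ ≤ (Lp * ‖x - y‖ ^ (γ / 2)) * M +
        (|p w| + 1) * (|K| * (Lq ^ γ * ‖x - y‖ ^ (γ / 2))) := by
        gcongr
        · exact b1.trans (by gcongr)
        · exact hM _ sx
    _ = _ := by ring

end

section
variable {U : Set ℂ} {Ψ : ℂ → ℝ} {P : ℂ → ℂ} {Q : ℂ} {b : ℝ} {z : ℂ}

theorem contDiffOn_two_of_hasFDerivAt (hU : IsOpen U)
    (hΨ : ∀ z ∈ U, HasFDerivAt Ψ (reCLM ∘L ContinuousLinearMap.mul ℝ ℂ (P z)) z)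
    (hP : ContDiffOn ℝ 1 P U) : ContDiffOn ℝ 2 Ψ U := by
  refine (contDiffOn_succ_iff_fderiv_of_isOpen (n := 1) hU).2
    ⟨fun z hz => (hΨ z hz).differentiableAt.differentiableWithinAt, by simp, ?_⟩
  exact (((ContinuousLinearMap.compL ℝ ℂ ℂ ℝ reCLM ∘L ContinuousLinearMap.mul ℝ ℂ).contDiff
    ).comp_contDiffOn hP).congr fun z hz => (hΨ z hz).fderiv

theorem lap_eq_of_hasFDerivAt (hU : IsOpen U) (hz : z ∈ U)
    (hΨ : ∀ z ∈ U, HasFDerivAt Ψ (reCLM ∘L ContinuousLinearMap.mul ℝ ℂ (P z)) z)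
    (hP : HasFDerivAt P
      (ContinuousLinearMap.mul ℝ ℂ Q + b • (conjCLE : ℂ →L[ℝ] ℂ)) z) :
    lap Ψ z = 2 * b := by
  have hd : ∀ e : ℂ, fderiv ℝ (fun w => fderiv ℝ Ψ w e) z e =
      ((Q * e + b * (starRingEnd ℂ) e) * e).re := by
    intro e
    have h1 : (fun w => fderiv ℝ Ψ w e) =ᶠ[𝓝 z] fun w => reCLM (P w * e) := by
      filter_upwards [hU.mem_nhds hz] with w hw
      rw [(hΨ w hw).fderiv]
      rfl
    have h2 := reCLM.hasFDerivAt.comp z (hP.mul_const' e)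
    rw [h1.fderiv_eq, show fderiv ℝ (fun w => reCLM (P w * e)) z = _ from h2.fderiv]
    simp
    ring
  rw [lap, hd, hd]
  simp
  ring

end

/-- The solution of the Dirichlet problem for `ΔΨ = f` on the sector of angle `βπ`: the logarithmic
potential of the odd density on the plane, transported by `z ↦ z ^ (1 / β)`. -/
def sectorPotential (β : ℝ) (f : ℂ → ℝ) (z : ℂ) : ℝ :=
  (2 * π)⁻¹ * logPotential (oddDensity β f) (z ^ ((β⁻¹ : ℝ) : ℂ))

/-- The complex gradient `∂₁Ψ - i ∂₂Ψ` of `Ψ = sectorPotential β f`. -/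
def sectorGradient (β : ℝ) (f : ℂ → ℝ) (z : ℂ) : ℂ :=
  ((2 * π)⁻¹ : ℝ) * (cauchyPotential (oddDensity β f) (z ^ ((β⁻¹ : ℝ) : ℂ)) *
    (((β⁻¹ : ℝ) : ℂ) * z ^ (((β⁻¹ : ℝ) : ℂ) - 1)))

section
variable {β M : ℝ} {f : ℂ → ℝ} {z : ℂ}

theorem norm_cpow_inv_sub_one (z : ℂ) :
    ‖z ^ (((β⁻¹ : ℝ) : ℂ) - 1)‖ = ‖z‖ ^ (β⁻¹ - 1) := by
  rw [← norm_cpow_real]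
  push_cast
  rfl

theorem abs_sectorPotential_le (hβ0 : 0 < β) (hβ : β < 1 / 2) (hf : ContinuousOn f (Sector β))
    (hM : ∀ z ∈ Sector β, |f z| ≤ M) (hM0 : 0 ≤ M) (z : ℂ) :
    |sectorPotential β f z| ≤ (2 * π)⁻¹ * (4 * β ^ 2 * rieszConst (2 * β)) * M * ‖z‖ ^ 2 := by
  have h := abs_logPotential_le (by linarith : 0 < 2 * β) (by linarith)
    (aestronglyMeasurable_oddDensity hβ0 hβ hf) (abs_oddDensity_le hβ0 hβ hM hM0) (by positivity)
    oddDensity_conj (z ^ ((β⁻¹ : ℝ) : ℂ))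
  have e : (‖z‖ ^ β⁻¹) ^ (2 * β) = ‖z‖ ^ 2 := by
    rw [← Real.rpow_mul (norm_nonneg z), show β⁻¹ * (2 * β) = (2 : ℕ) by field_simp; norm_num,
      Real.rpow_natCast]
  rw [norm_cpow_real, e] at h
  rw [sectorPotential, abs_mul, abs_of_nonneg (by positivity : 0 ≤ (2 * π)⁻¹)]
  calc _ ≤ _ := mul_le_mul_of_nonneg_left h (by positivity)
    _ = _ := by ring

theorem norm_sectorGradient_le (hβ0 : 0 < β) (hβ : β < 1 / 2)
    (hM : ∀ z ∈ Sector β, |f z| ≤ M) (hM0 : 0 ≤ M) (hz : z ≠ 0) :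
    ‖sectorGradient β f z‖ ≤ (2 * π)⁻¹ * (β * rieszConst (2 * β)) * M * ‖z‖ := by
  have hz' := norm_pos_iff.2 hz
  have h := norm_cauchyPotential_le (by linarith : 0 < 2 * β) (by linarith)
    (abs_oddDensity_le hβ0 hβ hM hM0) (w := z ^ ((β⁻¹ : ℝ) : ℂ))
    (fun h => hz ((cpow_eq_zero_iff _ _).1 h).1)
  rw [norm_cpow_real] at h
  have e : (‖z‖ ^ β⁻¹) ^ (2 * β - 1) * ‖z‖ ^ (β⁻¹ - 1) = ‖z‖ := by
    rw [← Real.rpow_mul hz'.le, ← Real.rpow_add hz',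
      show β⁻¹ * (2 * β - 1) + (β⁻¹ - 1) = 1 by field_simp; ring, Real.rpow_one]
  rw [sectorGradient, norm_mul, norm_mul, norm_mul, norm_real, norm_real, norm_cpow_inv_sub_one,
    Real.norm_of_nonneg (by positivity), Real.norm_of_nonneg (by positivity)]
  calc _ ≤ (2 * π)⁻¹ * ((β ^ 2 * M * (rieszConst (2 * β) * (‖z‖ ^ β⁻¹) ^ (2 * β - 1))) *
        (β⁻¹ * ‖z‖ ^ (β⁻¹ - 1))) := by gcongr
    _ = (2 * π)⁻¹ * (β * rieszConst (2 * β)) * M *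
        ((‖z‖ ^ β⁻¹) ^ (2 * β - 1) * ‖z‖ ^ (β⁻¹ - 1)) := by
        field_simp
    _ = _ := by rw [e]

theorem hasFDerivAt_sectorPotential (hβ0 : 0 < β) (hβ : β < 1 / 2) (hf : ContinuousOn f (Sector β))
    (hM : ∀ z ∈ Sector β, |f z| ≤ M) (hM0 : 0 ≤ M) (hz : z ∈ Sector β) :
    HasFDerivAt (sectorPotential β f)
      (reCLM ∘L ContinuousLinearMap.mul ℝ ℂ (sectorGradient β f z)) z := by
  have h1 := (hasStrictDerivAt_cpow_const ((β⁻¹ : ℝ) : ℂ)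
    (sector_subset_slitPlane hβ hz)).hasDerivAt.hasFDerivAt.restrictScalars ℝ
  have h2 := hasFDerivAt_logPotential (by linarith : 0 < 2 * β) (by linarith)
    (aestronglyMeasurable_oddDensity hβ0 hβ hf) (by positivity) (abs_oddDensity_le hβ0 hβ hM hM0)
    (slitPlane_ne_zero (mem_slitPlane_of_im_pos (im_cpow_inv_pos hβ0 hz)))
  have h3 := (h2.comp z h1).const_mul (2 * π)⁻¹
  refine h3.congr_fderiv ?_
  ext
  simp [sectorGradient]
  ring

theorem hasFDerivAt_sectorGradient (hβ0 : 0 < β) (hβ : β < 1 / 2) {S : ℂ} (hz : z ∈ Sector β)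
    (hF : HasFDerivAt (cauchyPotential (oddDensity β f))
      (ContinuousLinearMap.mul ℝ ℂ S +
        (π * oddDensity β f (z ^ ((β⁻¹ : ℝ) : ℂ))) • (conjCLE : ℂ →L[ℝ] ℂ))
      (z ^ ((β⁻¹ : ℝ) : ℂ))) :
    ∃ Q : ℂ, HasFDerivAt (sectorGradient β f)
      (ContinuousLinearMap.mul ℝ ℂ Q + (f z / 2) • (conjCLE : ℂ →L[ℝ] ℂ)) z := by
  have hzs := sector_subset_slitPlane hβ hz
  have hz' := norm_pos_iff.2 hz.1
  set a : ℂ := ((β⁻¹ : ℝ) : ℂ) with ha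
  have h1 := (hasStrictDerivAt_cpow_const a hzs).hasDerivAt.hasFDerivAt.restrictScalars ℝ
  have h2 := ((hasStrictDerivAt_cpow_const (a - 1) hzs).hasDerivAt.hasFDerivAt.restrictScalars
    ℝ).const_mul a
  have h3 := ((hF.comp z h1).mul h2).const_mul (((2 * π)⁻¹ : ℝ) : ℂ)
  set φ' := a * z ^ (a - 1) with hφ
  refine ⟨((2 * π)⁻¹ : ℝ) * (S * φ' ^ 2 + cauchyPotential (oddDensity β f) (z ^ a) *
    (a * ((a - 1) * z ^ (a - 1 - 1)))), h3.congr_fderiv ?_⟩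
  have hg : (2 * π)⁻¹ * (π * oddDensity β f (z ^ a)) * normSq φ' = f z / 2 := by
    rw [oddDensity_of_pos (im_cpow_inv_pos hβ0 hz), cpow_inv_cpow hβ0 hz, normSq_eq_norm_sq, hφ,
      norm_mul, ha, norm_real, norm_cpow_inv_sub_one, norm_cpow_real,
      Real.norm_of_nonneg (by positivity), mul_pow, ← Real.rpow_mul hz'.le,
      ← Real.rpow_mul_natCast hz'.le]
    have e : ‖z‖ ^ (β⁻¹ * (2 * β - 2)) * ‖z‖ ^ ((β⁻¹ - 1) * (2 : ℕ)) = 1 := by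
      rw [← Real.rpow_add hz', show β⁻¹ * (2 * β - 2) + (β⁻¹ - 1) * (2 : ℕ) = 0 by
        push_cast; field_simp; ring, Real.rpow_zero]
    calc _ = f z / 2 * (‖z‖ ^ (β⁻¹ * (2 * β - 2)) * ‖z‖ ^ ((β⁻¹ - 1) * (2 : ℕ))) := by
          field_simp
      _ = _ := by rw [e, mul_one]
  have hgc : (((2 * π)⁻¹ : ℝ) : ℂ) * (π * oddDensity β f (z ^ a)) * (φ' * (starRingEnd ℂ) φ') =
      f z / 2 := by
    rw [mul_conj]
    exact_mod_cast congrArg ofReal hg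
  refine ContinuousLinearMap.ext fun t => ?_
  simp only [_root_.add_apply, _root_.smul_apply, smul_eq_mul,
    ContinuousLinearMap.comp_apply, ContinuousLinearMap.coe_restrictScalars',
    ContinuousLinearMap.toSpanSingleton_apply, ContinuousLinearMap.mul_apply', Function.comp_apply,
    ContinuousLinearEquiv.coe_coe, conjCLE_apply, real_smul, map_mul]
  push_cast at hgc ⊢
  linear_combination (starRingEnd ℂ) t * hgc

theorem contDiffAt_cpow_const {r : ℂ} {n : ℕ∞} (hz : z ∈ slitPlane) :
    ContDiffAt ℝ n (fun z : ℂ => z ^ r) z := by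
  have h : DifferentiableOn ℂ (fun z : ℂ => z ^ r) slitPlane := fun w hw =>
    (hasStrictDerivAt_cpow_const r hw).hasDerivAt.differentiableAt.differentiableWithinAt
  exact ((h.contDiffOn isOpen_slitPlane).contDiffAt
    (isOpen_slitPlane.mem_nhds hz)).restrict_scalars ℝ

end

end

/-- **Existence for the Dirichlet–Poisson problem on a sector with quadratic growth
(Lemma 3.4, existence part).** For `0 < β < 1/2` there is `C = C(β) > 0` such that for every
bounded, locally Hölder continuous `f` on `Ω_β` there exists `Ψ`, continuous on `Ω̄_β` and
`C²` on `Ω_β`, with `ΔΨ = f` on `Ω_β`, `Ψ = 0` on `∂Ω_β`, and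
`|Ψ(x)| ≤ C ‖f‖_∞ |x|²`, `|∇Ψ(x)| ≤ C ‖f‖_∞ |x|` on `Ω_β`. -/
theorem sector_poisson_existence (β : ℝ) (hβ0 : 0 < β) (hβ : β < 1/2) :
    ∃ C : ℝ, 0 < C ∧
      ∀ f : ℂ → ℝ,
      (∃ M : ℝ, ∀ z ∈ Sector β, |f z| ≤ M) →
      (∀ z ∈ Sector β, ∃ ε > (0:ℝ), ∃ K γ : ℝ, 0 < γ ∧ γ ≤ 1 ∧
        ∀ w ∈ Sector β ∩ Metric.ball z ε, ∀ w' ∈ Sector β ∩ Metric.ball z ε,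
          |f w - f w'| ≤ K * ‖w - w'‖ ^ γ) →
      ∃ Ψ : ℂ → ℝ,
        ContinuousOn Ψ (closure (Sector β)) ∧
        ContDiffOn ℝ 2 Ψ (Sector β) ∧
        (∀ z ∈ Sector β, lap Ψ z = f z) ∧
        (∀ z ∈ frontier (Sector β), Ψ z = 0) ∧
        (∀ M : ℝ, (∀ z ∈ Sector β, |f z| ≤ M) →
          ∀ z ∈ Sector β, |Ψ z| ≤ C * M * ‖z‖ ^ 2 ∧ ‖fderiv ℝ Ψ z‖ ≤ C * M * ‖z‖) := by
  have hc := rieszConst_nonneg (2 * β)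
  refine ⟨(2 * π)⁻¹ * (4 * β ^ 2 * rieszConst (2 * β)) + (2 * π)⁻¹ * (β * rieszConst (2 * β)) + 1,
    by positivity, fun f hb hH => ⟨sectorPotential β f, ?_⟩⟩
  have hf : ContinuousOn f (Sector β) := by
    intro z hz
    obtain ⟨ε, hε, K, γ, hγ, -, h⟩ := hH z hz
    exact (continuousWithinAt_inter (Metric.ball_mem_nhds z hε)).1
      (continuousWithinAt_of_holder hγ fun y hy => h y hy z ⟨hz, Metric.mem_ball_self hε⟩)
  have hne : (Sector β).Nonempty := ⟨_, cpow_mem_sector hβ0 hβ (w := I) (by simp)⟩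
  have hbd0 : ∀ M, (∀ z ∈ Sector β, |f z| ≤ M) → 0 ≤ M := fun M hM =>
    (abs_nonneg _).trans (hM _ hne.some_mem)
  obtain ⟨M, hM⟩ := hb
  have hM0 := hbd0 M hM
  have hs : 0 < 2 * β := by linarith
  have hs1 : 2 * β < 1 := by linarith
  have hg := aestronglyMeasurable_oddDensity hβ0 hβ hf
  have hA := abs_oddDensity_le hβ0 hβ hM hM0
  have hA0 : 0 ≤ β ^ 2 * M := by positivity
  have hU := isOpen_sector hβ
  have hΨ := fun z => hasFDerivAt_sectorPotential hβ0 hβ hf hM hM0 (z := z)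
  have hV := continuous_logPotential hs hs1 hg hA hA0 oddDensity_conj
  refine ⟨fun z hz => ?_, contDiffOn_two_of_hasFDerivAt hU hΨ fun z hz => ?_, fun z hz => ?_,
    fun z hz => ?_, fun N hN z hz => ⟨?_, ?_⟩⟩
  · have h1 : 0 ≤ z.re ∨ z.im ≠ 0 := by
      rcases eq_or_ne z 0 with rfl | hz0
      · exact Or.inl le_rfl
      · exact (mem_slitPlane_iff.1 (mem_slitPlane_and_arg_of_mem_closure_sector hβ hz hz0).1).imp
          le_of_lt id
    exact (continuousAt_const.mul (hV.continuousAt.comp (continuousAt_cpow_const_of_re_pos h1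
      (by rw [ofReal_re]; positivity)))).continuousWithinAt
  · obtain ⟨R, K, γ, hR, hK, hγ, hγ1, h0, hHg⟩ :=
      oddDensity_locally_holder hβ0 hβ hM hM0 hH (im_cpow_inv_pos hβ0 hz)
    have hF := contDiffAt_cauchyPotential hs hs1 hγ hγ1 hg hA hK hHg hA0 h0 hR
    have hzs := sector_subset_slitPlane hβ hz
    exact (contDiffAt_const.mul ((hF.comp z (contDiffAt_cpow_const hzs)).mul
      (contDiffAt_const.mul (contDiffAt_cpow_const hzs)))).contDiffWithinAt
  · obtain ⟨R, K, γ, hR, hK, hγ, hγ1, h0, hHg⟩ :=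
      oddDensity_locally_holder hβ0 hβ hM hM0 hH (im_cpow_inv_pos hβ0 hz)
    obtain ⟨Q, hQ⟩ := hasFDerivAt_sectorGradient hβ0 hβ hz
      (hasFDerivAt_cauchyPotential hs hs1 hγ hγ1 hg hA hK hHg hA0 h0 (Metric.mem_ball_self hR))
    rw [lap_eq_of_hasFDerivAt hU hz hΨ hQ, mul_div_cancel₀ _ two_ne_zero]
  · have h := im_cpow_inv_eq_zero_of_mem_frontier_sector hβ0 hβ hz
    rw [sectorPotential, ← re_add_im (z ^ ((β⁻¹ : ℝ) : ℂ)), h, ofReal_zero, zero_mul, add_zero,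
      logPotential_ofReal oddDensity_conj, mul_zero]
  · have hN0 := hbd0 N hN
    refine (abs_sectorPotential_le hβ0 hβ hf hN hN0 z).trans ?_
    gcongr
    rw [add_assoc]
    exact le_add_of_nonneg_right (by positivity)
  · have hN0 := hbd0 N hN
    rw [(hΨ z hz).fderiv]
    calc _ ≤ ‖reCLM‖ * ‖ContinuousLinearMap.mul ℝ ℂ (sectorGradient β f z)‖ :=
          ContinuousLinearMap.opNorm_comp_le _ _
      _ = ‖sectorGradient β f z‖ := by
          rw [reCLM_norm, one_mul, ContinuousLinearMap.opNorm_mul_apply]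
      _ ≤ _ := norm_sectorGradient_le hβ0 hβ hN hN0 hz.1
      _ ≤ _ := by
          gcongr
          rw [add_right_comm]
          exact le_add_of_nonneg_left (by positivity)
end
end
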